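/- arXiv:math/0602143 — 2 statements merged into one kernel-verified Lean document; each statement's English description precedes it below -/
import Mathlib

section
/- For every permutation class C, exactly one of the following occurs: either |C_n| ≥ F_n for all n (where F_n is the nth Fibonacci number with F_1 = F_2 = 1), or C lies in Grid(M) for some matrix M with entries in {0, 1, −1} whose bipartite graph is a matching and there is a polynomial p(n) such that |C_n| = p(n) for all sufficiently large n. -/
/-- `σ ≤ π`: the permutation `π` contains the pattern `σ`, i.e. `π` has a subsequence
in the same relative order as `σ`. -/
def PermContains {k n : ℕ} (σ : Equiv.Perm (Fin k)) (π : Equiv.Perm (Fin n)) : Prop :=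
  ∃ f : Fin k → Fin n, StrictMono f ∧ ∀ i j : Fin k, σ i < σ j ↔ π (f i) < π (f j)

/-- A permutation class: a set of permutations (of each length) closed downward
under the containment order. -/
def IsPermClass (C : ∀ n : ℕ, Set (Equiv.Perm (Fin n))) : Prop :=
  ∀ (k n : ℕ) (σ : Equiv.Perm (Fin k)) (π : Equiv.Perm (Fin n)),
    π ∈ C n → PermContains σ π → σ ∈ C k
/-- The point `i` (with value `π i`) lies in the block of the gridding `(c, r)`
indexed by column `k` and row `l`. -/
def InBlock {n t u : ℕ} (π : Equiv.Perm (Fin n)) (c : Fin (t + 1) → ℕ) (r : Fin (u + 1) → ℕ)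
    (k : Fin t) (l : Fin u) (i : Fin n) : Prop :=
  c k.castSucc ≤ (i : ℕ) ∧ (i : ℕ) < c k.succ ∧
    r l.castSucc ≤ (π i : ℕ) ∧ (π i : ℕ) < r l.succ

/-- `(c, r)` is an `M`-gridding of `π`: each block is increasing, decreasing or empty
according to the corresponding entry of the `t × u` matrix `M` (entries in {0, 1, -1},
columns indexed by `Fin t`, rows by `Fin u`). -/
def IsGridding {n t u : ℕ} (M : Fin t → Fin u → SignType) (π : Equiv.Perm (Fin n))
    (c : Fin (t + 1) → ℕ) (r : Fin (u + 1) → ℕ) : Prop :=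
  Monotone c ∧ Monotone r ∧ c 0 = 0 ∧ c (Fin.last t) = n ∧ r 0 = 0 ∧ r (Fin.last u) = n ∧
    ∀ (k : Fin t) (l : Fin u),
      (M k l = 1 → ∀ i j : Fin n,
        InBlock π c r k l i → InBlock π c r k l j → i < j → π i < π j) ∧
      (M k l = -1 → ∀ i j : Fin n,
        InBlock π c r k l i → InBlock π c r k l j → i < j → π j < π i) ∧
      (M k l = 0 → ∀ i : Fin n, ¬ InBlock π c r k l i)

/-- `π ∈ Grid(M)`: the permutation `π` possesses an `M`-gridding. -/
def InGrid {n t u : ℕ} (M : Fin t → Fin u → SignType) (π : Equiv.Perm (Fin n)) : Prop :=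
  ∃ c r, IsGridding M π c r
/-- The bipartite graph `G(M)` is a matching: every vertex (column or row) is incident
to at most one edge, i.e. every column and every row of `M` has at most one nonzero entry. -/
def IsMatchingMat {t u : ℕ} (M : Fin t → Fin u → SignType) : Prop :=
  (∀ (k : Fin t) (l l' : Fin u), M k l ≠ 0 → M k l' ≠ 0 → l = l') ∧
  (∀ (k k' : Fin t) (l : Fin u), M k l ≠ 0 → M k' l ≠ 0 → k = k')



def RatGen (f : ℕ → ℕ) : Prop :=
  ∃ (d : ℕ) (q : Polynomial ℚ),
    PowerSeries.mk (fun n => (f n : ℚ)) * (1 - PowerSeries.X) ^ d = (q : PowerSeries ℚ)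

lemma RatGen.add {f g : ℕ → ℕ} (hf : RatGen f) (hg : RatGen g) :
    RatGen (fun n => f n + g n) := by
  obtain ⟨d, q, h⟩ := hf
  obtain ⟨e, r, h'⟩ := hg
  refine ⟨d + e, q * (1 - Polynomial.X) ^ e + r * (1 - Polynomial.X) ^ d, ?_⟩
  have : PowerSeries.mk (fun n => ((f n + g n : ℕ) : ℚ)) =
      PowerSeries.mk (fun n => (f n : ℚ)) + PowerSeries.mk (fun n => (g n : ℚ)) := by
    ext n; simp
  rw [this]
  push_cast
  rw [← h, ← h']
  ring

lemma RatGen.zero : RatGen (fun _ => 0) := by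
  refine ⟨0, 0, ?_⟩
  ext n; simp

lemma RatGen.sum {ι : Type*} (s : Finset ι) (f : ι → ℕ → ℕ) (h : ∀ i ∈ s, RatGen (f i)) :
    RatGen (fun n => ∑ i ∈ s, f i n) := by
  classical
  induction s using Finset.induction_on with
  | empty => simpa using RatGen.zero
  | insert a s ha ih =>
    simp only [Finset.sum_insert ha]
    exact RatGen.add (h a (by simp)) (ih fun i hi => h i (by simp [hi]))

lemma RatGen.shift {f : ℕ → ℕ} (hf : RatGen f) :
    RatGen (fun n => if n = 0 then 0 else f (n - 1)) := by
  obtain ⟨d, q, h⟩ := hf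
  refine ⟨d, Polynomial.X * q, ?_⟩
  have : PowerSeries.mk (fun n => ((if n = 0 then 0 else f (n - 1) : ℕ) : ℚ)) =
      PowerSeries.X * PowerSeries.mk (fun n => (f n : ℚ)) := by
    ext n
    cases n <;> simp [PowerSeries.coeff_succ_X_mul]
  rw [this]
  push_cast
  rw [← h]
  ring

lemma RatGen.shiftBy {f : ℕ → ℕ} (hf : RatGen f) (k : ℕ) :
    RatGen (fun n => if n < k then 0 else f (n - k)) := by
  induction k with
  | zero => simpa using hf
  | succ k ih =>
    convert ih.shift using 2 with n
    cases n with
    | zero => simp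
    | succ n => simp

lemma RatGen.psum {f : ℕ → ℕ} (hf : RatGen f) :
    RatGen (fun n => ∑ p ∈ Finset.HasAntidiagonal.antidiagonal n, f p.2) := by
  obtain ⟨d, q, h⟩ := hf
  refine ⟨d + 1, q, ?_⟩
  have : PowerSeries.mk (fun n => ((∑ p ∈ Finset.HasAntidiagonal.antidiagonal n, f p.2 : ℕ) : ℚ)) =
      PowerSeries.mk 1 * PowerSeries.mk (fun n => (f n : ℚ)) := by
    ext n
    simp [PowerSeries.coeff_mul]
  have h1 : (PowerSeries.mk 1 : PowerSeries ℚ) * (1 - PowerSeries.X) = 1 :=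
    PowerSeries.mk_one_mul_one_sub_eq_one ℚ
  rw [this, ← h]
  calc _ = ((PowerSeries.mk 1 : PowerSeries ℚ) * (1 - PowerSeries.X)) *
        (PowerSeries.mk (fun n => (f n : ℚ)) * (1 - PowerSeries.X) ^ d) := by ring
    _ = _ := by rw [h1, one_mul]

lemma RatGen.conv (J : ℕ) : ∀ (g : ℕ → ℕ → ℕ) (_ : ∀ j, RatGen (g j))
    (_ : ∀ j, J ≤ j → g j = g J), RatGen (fun n => ∑ p ∈ Finset.HasAntidiagonal.antidiagonal n, g p.1 p.2) := by
  induction J with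
  | zero =>
    intro g hg hJ
    convert (hg 0).psum using 3 with n p
    rw [hJ p.1 (Nat.zero_le _)]
  | succ J ih =>
    intro g hg hJ
    have h1 := ih (fun j => g (j + 1)) (fun j => hg _) (fun j hj => hJ _ (by omega))
    convert (hg 0).add h1.shift using 2 with n
    cases n with
    | zero => simp
    | succ n => simp [Finset.Nat.sum_antidiagonal_succ]

lemma RatGen.eventually {f : ℕ → ℕ} (hf : RatGen f) :
    ∃ (p : Polynomial ℚ) (N : ℕ), ∀ n : ℕ, N ≤ n → (f n : ℚ) = p.eval (n : ℚ) := by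
  obtain ⟨d, q, h⟩ := hf
  refine ⟨q.hilbertPoly d, q.natDegree + 1, fun n hn => ?_⟩
  rw [← Polynomial.coeff_mul_invOneSubPow_eq_hilbertPoly_eval d (by omega : q.natDegree < n), ← h]
  have h2 : ((1 - PowerSeries.X) ^ d : PowerSeries ℚ) * (PowerSeries.invOneSubPow ℚ d).val = 1 := by
    have := (PowerSeries.invOneSubPow ℚ d).inv_val
    rw [← PowerSeries.invOneSubPow_inv_eq_one_sub_pow]
    exact this
  rw [mul_assoc, h2, mul_one]
  simp

noncomputable def cnt {K : ℕ} (E : Set (Fin K → ℕ)) (n : ℕ) : ℕ :=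
  Nat.card {v : Fin K → ℕ // v ∈ E ∧ ∑ i, v i = n}

instance finite_cnt {K : ℕ} (E : Set (Fin K → ℕ)) (n : ℕ) :
    Finite {v : Fin K → ℕ // v ∈ E ∧ ∑ i, v i = n} := by
  have : (Set.Iic (fun _ : Fin K => n)).Finite := Set.finite_Iic _
  refine (this.subset (t := {v | v ∈ E ∧ ∑ i, v i = n}) ?_).to_subtype
  rintro v ⟨-, h⟩ i
  rw [← h]
  exact Finset.single_le_sum (f := v) (fun _ _ => Nat.zero_le _) (Finset.mem_univ i)

lemma cnt_succ {K : ℕ} (E : Set (Fin (K + 1) → ℕ)) (n : ℕ) :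
    cnt E n = ∑ p ∈ Finset.HasAntidiagonal.antidiagonal n, cnt {v | (Fin.cons p.1 v : Fin (K+1) → ℕ) ∈ E} p.2 := by
  unfold cnt
  rw [← Finset.sum_coe_sort]
  rw [← Nat.card_sigma (α := {x // x ∈ Finset.HasAntidiagonal.antidiagonal n})
    (β := fun p => {v : Fin K → ℕ // v ∈ {v | (Fin.cons p.1.1 v : Fin (K+1) → ℕ) ∈ E} ∧ ∑ i, v i = p.1.2})]
  refine Nat.card_congr
    { toFun := fun v => ⟨⟨(v.1 0, ∑ i, Fin.tail v.1 i), ?_⟩, ⟨Fin.tail v.1, ?_, rfl⟩⟩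
      invFun := fun x => ⟨Fin.cons x.1.1.1 x.2.1, x.2.2.1, ?_⟩
      left_inv := ?_
      right_inv := ?_ }
  · have := v.2.2
    rw [Fin.sum_univ_succ] at this
    simpa [Fin.tail] using this
  · have := v.2.1
    simpa using this
  · have h1 := x.1.2
    have h2 := x.2.2.2
    rw [Finset.HasAntidiagonal.mem_antidiagonal] at h1
    rw [Fin.sum_univ_succ]
    simp only [Fin.cons_zero, Fin.cons_succ]
    omega
  · intro v
    simp
  · rintro ⟨⟨⟨a, b⟩, h⟩, ⟨v, hv, hs⟩⟩
    simp only at hs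
    subst hs
    rfl

lemma lower_stab {K : ℕ} (E : ℕ → Set (Fin K → ℕ)) (hl : ∀ j, IsLowerSet (E j))
    (hE : Antitone E) : ∃ J, ∀ j, J ≤ j → E j = E J := by
  by_contra! hcon
  have h1 : ∀ J, ∃ j, J < j ∧ ∃ v, v ∈ E J ∧ v ∉ E j := by
    intro J
    obtain ⟨j, hj, hne⟩ := hcon J
    have hsub : E j ⊆ E J := hE hj
    have : ¬ E J ⊆ E j := fun h => hne (hsub.antisymm h)
    obtain ⟨v, hv, hv'⟩ := Set.not_subset.1 this
    refine ⟨j, lt_of_le_of_ne hj ?_, v, hv, hv'⟩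
    rintro rfl
    exact hne rfl
  choose nx hlt v hv hv' using h1
  let s : ℕ → ℕ := fun n => nx^[n] 0
  have hs : ∀ n, s (n + 1) = nx (s n) := fun n => Function.iterate_succ_apply' nx n 0
  have hsm : StrictMono s := strictMono_nat_of_lt_succ fun n => by rw [hs]; exact hlt _
  obtain ⟨m, n, hmn, hle⟩ := wellQuasiOrdered_le (α := Fin K → ℕ) (fun n => v (s n))
  have h3 : v (s n) ∈ E (s (m + 1)) := hE (hsm.monotone (by omega : m + 1 ≤ n)) (hv (s n))
  have h4 := hl _ hle h3
  rw [hs] at h4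
  exact hv' _ h4

lemma lower_ratGen (K : ℕ) : ∀ (E : Set (Fin K → ℕ)), IsLowerSet E → RatGen (cnt E) := by
  induction K with
  | zero =>
    intro E _
    refine ⟨0, Polynomial.C ((cnt E 0 : ℕ) : ℚ), ?_⟩
    ext n
    cases n with
    | zero => simp
    | succ n =>
      have : cnt E (n + 1) = 0 := by
        unfold cnt
        have : IsEmpty {v : Fin 0 → ℕ // v ∈ E ∧ ∑ i, v i = n + 1} := by
          constructor
          rintro ⟨v, -, h⟩
          simp at h
        simp
      simp [this]
  | succ K ih =>
    intro E hE
    have hl : ∀ j, IsLowerSet {v : Fin K → ℕ | (Fin.cons j v : Fin (K+1) → ℕ) ∈ E} := by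
      intro j a b hba ha
      refine hE ?_ ha
      exact Fin.cons_le_cons.2 ⟨le_rfl, hba⟩
    obtain ⟨J, hJ⟩ := lower_stab (fun j => {v : Fin K → ℕ | (Fin.cons j v : Fin (K+1) → ℕ) ∈ E}) hl
      (by
        intro i j hij v hv
        refine hE ?_ hv
        exact Fin.cons_le_cons.2 ⟨hij, le_rfl⟩)
    have := RatGen.conv J (fun j => cnt {v : Fin K → ℕ | (Fin.cons j v : Fin (K+1) → ℕ) ∈ E})
      (fun j => ih _ (hl j)) (fun j hj => by rw [hJ j hj])
    convert this using 1
    ext n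
    exact cnt_succ E n

/-! ### Part 2: growth of Fibonacci numbers -/

lemma fib_succ_le_two_pow (n : ℕ) : Nat.fib (n + 1) ≤ 2 ^ n := by
  induction n with
  | zero => simp
  | succ n ih =>
    have h1 : Nat.fib (n + 2) = Nat.fib n + Nat.fib (n + 1) := Nat.fib_add_two
    have h2 : Nat.fib n ≤ Nat.fib (n + 1) := Nat.fib_le_fib_succ
    rw [pow_succ]
    have : n + 1 + 1 = n + 2 := rfl
    rw [this]
    omega

lemma two_pow_le_fib (n : ℕ) : 2 ^ n ≤ Nat.fib (2 * n + 1) := by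
  induction n with
  | zero => simp
  | succ n ih =>
    have h1 : Nat.fib (2 * n + 3) = Nat.fib (2 * n + 1) + Nat.fib (2 * n + 2) := Nat.fib_add_two
    have h2 : Nat.fib (2 * n + 1) ≤ Nat.fib (2 * n + 2) := Nat.fib_le_fib_succ
    rw [pow_succ]
    have : 2 * (n + 1) + 1 = 2 * n + 3 := by ring
    rw [this]
    omega

lemma poly_not_fib (p : Polynomial ℚ) (N : ℕ)
    (h : ∀ n : ℕ, N ≤ n → (Nat.fib n : ℚ) ≤ p.eval (n : ℚ)) : False := by
  let q : Polynomial ℝ := (p.map (algebraMap ℚ ℝ)).comp (2 * Polynomial.X + 1)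
  have hq : ∀ n : ℕ, N ≤ n → (2 : ℝ) ^ n ≤ q.eval (n : ℝ) := by
    intro n hn
    have h1 := h (2 * n + 1) (by omega)
    have h2 := two_pow_le_fib n
    have h3 : ((2 : ℚ)) ^ n ≤ p.eval ((2 * n + 1 : ℕ) : ℚ) := by
      refine le_trans ?_ h1
      exact_mod_cast h2
    have h4 : q.eval (n : ℝ) = ((p.eval ((2 * n + 1 : ℕ) : ℚ) : ℚ) : ℝ) := by
      simp only [q, Polynomial.eval_comp]
      have : Polynomial.eval (n : ℝ) (2 * Polynomial.X + 1 : Polynomial ℝ) =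
          algebraMap ℚ ℝ ((2 * n + 1 : ℕ) : ℚ) := by
        simp
      rw [this, Polynomial.eval_map_apply]
      rfl
    rw [h4]
    exact_mod_cast h3
  have hlit : (fun n : ℕ => q.eval (n : ℝ)) =o[Filter.atTop] (fun n : ℕ => (2 : ℝ) ^ n) := by
    have : (fun n : ℕ => q.eval (n : ℝ)) =
        fun n : ℕ => ∑ i ∈ Finset.range (q.natDegree + 1), q.coeff i * (n : ℝ) ^ i := by
      ext n
      rw [Polynomial.eval_eq_sum_range]
    rw [this]
    refine Asymptotics.IsLittleO.fun_sum fun i _ => ?_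
    refine Asymptotics.IsLittleO.const_mul_left ?_ _
    exact isLittleO_pow_const_const_pow_of_one_lt i (by norm_num)
  have h5 := Asymptotics.IsLittleO.bound hlit (show (0 : ℝ) < 1 / 2 by norm_num)
  obtain ⟨n, hn1, hn2⟩ := (h5.and (Filter.eventually_ge_atTop N)).exists
  have h6 := hq n hn2
  have h7 : (0 : ℝ) < 2 ^ n := by positivity
  rw [Real.norm_of_nonneg h7.le] at hn1
  have := (le_abs_self (q.eval (n : ℝ)))
  rw [Real.norm_eq_abs] at hn1
  linarith


/-! ### Part 3: patterns and counting -/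

lemma exists_std {n : ℕ} {α : Type*} [LinearOrder α] (g : Fin n → α) (hg : Function.Injective g) :
    ∃ σ : Equiv.Perm (Fin n), ∀ i j, σ i < σ j ↔ g i < g j := by
  refine ⟨(Tuple.sort g)⁻¹, fun i j => ?_⟩
  have hm : StrictMono (g ∘ Tuple.sort g) :=
    (Tuple.monotone_sort g).strictMono_of_injective (hg.comp (Tuple.sort g).injective)
  rw [← hm.lt_iff_lt]
  simp

lemma perm_ext_lt {n : ℕ} {σ τ : Equiv.Perm (Fin n)}
    (h : ∀ i j, σ i < σ j ↔ τ i < τ j) : σ = τ := by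
  have hm : StrictMono (fun i => τ (σ⁻¹ i)) := by
    intro i j hij
    rw [← h]
    simpa using hij
  have h2 : ∀ i, τ (σ⁻¹ i) = i := by
    let e : Fin n ≃o Fin n := StrictMono.orderIsoOfSurjective _ hm
      ((σ⁻¹.trans τ).surjective)
    intro i
    have : e = OrderIso.refl _ := Subsingleton.elim _ _
    exact congrArg (fun f : Fin n ≃o Fin n => f i) this
  ext i
  have := h2 (σ i)
  rw [show σ⁻¹ (σ i) = i from σ.symm_apply_apply i] at this
  rw [this]

lemma card_le_of_family {C : ∀ n : ℕ, Set (Equiv.Perm (Fin n))} (hC : IsPermClass C)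
    {N n : ℕ} {π : Equiv.Perm (Fin N)} (hπ : π ∈ C N) {ι : Type*} (S : Finset ι)
    (f : ι → Fin n → Fin N) (hf : ∀ s ∈ S, StrictMono (f s))
    (hinj : ∀ s ∈ S, ∀ t ∈ S,
      (∀ i j, π (f s i) < π (f s j) ↔ π (f t i) < π (f t j)) → s = t) :
    S.card ≤ Nat.card (C n) := by
  have h1 : ∀ s : S, ∃ σ : Equiv.Perm (Fin n), ∀ i j, σ i < σ j ↔ π (f s i) < π (f s j) :=
    fun s => exists_std (fun i => π (f s i)) (π.injective.comp (hf s s.2).injective)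
  choose σ hσ using h1
  have hmem : ∀ s, σ s ∈ C n := fun s => hC n N _ _ hπ ⟨f s, hf s s.2, hσ s⟩
  have : Function.Injective (fun s : S => (⟨σ s, hmem s⟩ : C n)) := by
    intro s t hst
    simp only [Subtype.mk.injEq] at hst
    refine Subtype.ext (hinj s s.2 t t.2 fun i j => ?_)
    rw [← hσ s, ← hσ t, hst]
  have h2 := Nat.card_le_card_of_injective _ this
  simpa using h2

lemma exists_enum {ι : Type*} (J : Finset ι) (p : ι → ℕ) (hp : Set.InjOn p J) {n : ℕ}
    (hn : J.card = n) : ∃ e : Fin n → ι, (∀ k, e k ∈ J) ∧ (∀ j ∈ J, ∃ k, e k = j) ∧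
      StrictMono (fun k => p (e k)) := by
  classical
  have hc : (J.image p).card = n := by rw [Finset.card_image_of_injOn hp, hn]
  have h1 : ∀ k : Fin n, ∃ j ∈ J, p j = (J.image p).orderEmbOfFin hc k := by
    intro k
    have := Finset.orderEmbOfFin_mem (J.image p) hc k
    exact Finset.mem_image.1 this
  choose e he hpe using h1
  refine ⟨e, he, ?_, ?_⟩
  · intro j hj
    have : p j ∈ Set.range ((J.image p).orderEmbOfFin hc) := by
      rw [Finset.range_orderEmbOfFin]
      exact Finset.mem_coe.2 (Finset.mem_image_of_mem p hj)
    obtain ⟨k, hk⟩ := this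
    refine ⟨k, hp (he k) hj ?_⟩
    rw [hpe, hk]
  · intro k l hkl
    simp only [hpe]
    exact ((J.image p).orderEmbOfFin hc).strictMono hkl

/-- A horizontal line crossed by `n` position-disjoint pairs gives `2 ^ n` permutations. -/
lemma two_pow_le_of_cross {C : ∀ n : ℕ, Set (Equiv.Perm (Fin n))} (hC : IsPermClass C)
    {N n : ℕ} {π : Equiv.Perm (Fin N)} (hπ : π ∈ C N) {ι : Type*} (J : Finset ι)
    (hJ : J.card = n) (pl ph : ι → ℕ) (a b : ι → Fin N) (z : Fin N)
    (hdis : ∀ i ∈ J, ∀ j ∈ J, i ≠ j → ph i < pl j ∨ ph j < pl i)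
    (ha : ∀ j ∈ J, pl j ≤ a j ∧ a j ≤ ph j) (hb : ∀ j ∈ J, pl j ≤ b j ∧ b j ≤ ph j)
    (hz : ∀ j ∈ J, (z : ℕ) < pl j ∨ ph j < z)
    (hlo : ∀ j ∈ J, π (a j) < π z) (hhi : ∀ j ∈ J, π z < π (b j)) :
    2 ^ n ≤ Nat.card (C (n + 1)) := by
  classical
  let p : Option ι → ℕ := fun o => o.elim (z : ℕ) pl
  let q : Option ι → ℕ := fun o => o.elim (z : ℕ) ph
  let J' : Finset (Option ι) := Finset.insertNone J
  have hpq : ∀ x ∈ J', p x ≤ q x := by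
    rintro (_ | j) hj
    · exact le_rfl
    · have hj' : j ∈ J := by simpa [J'] using hj
      have := ha j hj'
      show pl j ≤ ph j
      omega
  have hdis' : ∀ x ∈ J', ∀ y ∈ J', x ≠ y → q x < p y ∨ q y < p x := by
    rintro (_ | i) hi (_ | j) hj hne
    · exact absurd rfl hne
    · have hj' : j ∈ J := by simpa [J'] using hj
      exact hz j hj'
    · have hi' : i ∈ J := by simpa [J'] using hi
      exact (hz i hi').symm
    · have hj' : j ∈ J := by simpa [J'] using hj
      have hi' : i ∈ J := by simpa [J'] using hi
      exact hdis i hi' j hj' (fun h => hne (by rw [h]))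
  have hinj : Set.InjOn p J' := by
    intro x hx y hy hxy
    by_contra hne
    have h1 := hpq x hx
    have h2 := hpq y hy
    have h3 := hdis' x hx y hy hne
    omega
  have hcard : J'.card = n + 1 := by simp [J', hJ]
  obtain ⟨e, heJ, hsurj, hmono⟩ := exists_enum J' p hinj hcard
  have hlt : ∀ k l, k < l → q (e k) < p (e l) := by
    intro k l hkl
    have h1 := hmono hkl
    have h2 := hdis' (e k) (heJ k) (e l) (heJ l) (by intro h; simp [h] at h1)
    have h3 := hpq _ (heJ k)
    have h4 := hpq _ (heJ l)
    simp only at h1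
    omega
  let pt : Finset ι → Option ι → Fin N := fun S o => o.elim z (fun j => if j ∈ S then b j else a j)
  have hpt : ∀ S, ∀ x ∈ J', p x ≤ pt S x ∧ pt S x ≤ q x := by
    rintro S (_ | j) hj
    · exact ⟨le_rfl, le_rfl⟩
    · have hj' : j ∈ J := by simpa [J'] using hj
      show pl j ≤ ((if j ∈ S then b j else a j : Fin N) : ℕ) ∧
        ((if j ∈ S then b j else a j : Fin N) : ℕ) ≤ ph j
      split_ifs
      · exact hb j hj'
      · exact ha j hj'
  have key := card_le_of_family hC hπ J.powerset (fun S k => pt S (e k)) (by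
    intro S _ k l hkl
    have h1 := hlt k l hkl
    have h2 := hpt S _ (heJ k)
    have h3 := hpt S _ (heJ l)
    show (pt S (e k) : ℕ) < pt S (e l)
    omega) (by
    intro S hS T hT hST
    rw [Finset.mem_powerset] at hS hT
    obtain ⟨k0, hk0⟩ := hsurj none (by simp [J'])
    have hrec : ∀ j ∈ J, (j ∈ S ↔ j ∈ T) := by
      intro j hj
      obtain ⟨k, hk⟩ := hsurj (some j) (by simp [J', hj])
      have h := hST k0 k
      simp only [hk0, hk] at h
      have h' : π z < π (if j ∈ S then b j else a j) ↔ π z < π (if j ∈ T then b j else a j) := h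
      have h1 := hlo j hj
      have h2 := hhi j hj
      by_cases hs : j ∈ S <;> by_cases ht : j ∈ T <;> simp only [hs, ht, if_true, if_false] at h' ⊢
      · exact absurd (h'.1 h2) h1.asymm
      · exact absurd (h'.2 h2) h1.asymm
    ext j
    constructor
    · intro h; exact (hrec j (hS h)).1 h
    · intro h; exact (hrec j (hT h)).2 h)
  rw [Finset.card_powerset, hJ] at key
  exact key

/-- Subsets of `range m` without consecutive elements. -/
def ncSets : ℕ → Finset (Finset ℕ)
  | 0 => {∅}
  | 1 => {∅, {0}}
  | (m + 2) => ncSets (m + 1) ∪ (ncSets m).image (insert (m + 1))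

lemma ncSets_lt (m : ℕ) : ∀ T ∈ ncSets m, ∀ i ∈ T, i < m := by
  induction m using Nat.twoStepInduction with
  | zero => simp [ncSets]
  | one => simp [ncSets]
  | more m ih1 ih2 =>
    intro T hT i hi
    simp only [ncSets, Finset.mem_union, Finset.mem_image] at hT
    rcases hT with hT | ⟨T, hT, rfl⟩
    · have := ih2 T hT i hi
      omega
    · rcases Finset.mem_insert.1 hi with rfl | hi
      · omega
      · have := ih1 T hT i hi
        omega

lemma ncSets_nc (m : ℕ) : ∀ T ∈ ncSets m, ∀ i ∈ T, i + 1 ∉ T := by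
  induction m using Nat.twoStepInduction with
  | zero => simp [ncSets]
  | one => simp [ncSets]
  | more m ih1 ih2 =>
    intro T hT i hi
    simp only [ncSets, Finset.mem_union, Finset.mem_image] at hT
    rcases hT with hT | ⟨T, hT, rfl⟩
    · exact ih2 T hT i hi
    · have hl := ncSets_lt m T hT
      rw [Finset.mem_insert] at hi ⊢
      rintro (h | h)
      · rcases hi with rfl | hi
        · omega
        · have := hl i hi; omega
      · rcases hi with rfl | hi
        · have := hl _ h; omega
        · exact ih1 T hT i hi h

lemma ncSets_card (m : ℕ) : (ncSets m).card = Nat.fib (m + 2) := by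
  induction m using Nat.twoStepInduction with
  | zero => simp [ncSets]
  | one =>
    show ({∅, {0}} : Finset (Finset ℕ)).card = _
    rfl
  | more m ih1 ih2 =>
    have h1 : Nat.fib (m + 2 + 2) = Nat.fib (m + 2) + Nat.fib (m + 2 + 1) := Nat.fib_add_two
    rw [h1, ncSets, Finset.card_union_of_disjoint, Finset.card_image_of_injOn, ih1, ih2]
    · have : m + 1 + 2 = m + 2 + 1 := by ring
      rw [this]; ring
    · intro T hT U hU hTU
      have hT' : m + 1 ∉ T := fun h => by have := ncSets_lt m T hT _ h; omega
      have hU' : m + 1 ∉ U := fun h => by have := ncSets_lt m U hU _ h; omega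
      rw [← Finset.erase_insert hT', ← Finset.erase_insert hU', hTU]
    · rw [Finset.disjoint_left]
      intro T hT hT2
      obtain ⟨U, hU, rfl⟩ := Finset.mem_image.1 hT2
      have := ncSets_lt (m + 1) _ hT (m + 1) (Finset.mem_insert_self _ _)
      omega

/-- A long sum of `21`s (or skew sum of `12`s) gives Fibonacci many permutations. -/
lemma fib_le_of_sum {C : ∀ n : ℕ, Set (Equiv.Perm (Fin n))} (hC : IsPermClass C)
    {N n : ℕ} {π : Equiv.Perm (Fin N)} (hπ : π ∈ C N) (a b : Fin n → Fin N)
    (hab : ∀ k, a k < b k) (hlt : ∀ k l, k < l → b k < a l)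
    (G : Fin N → ℤ)
    (hG : (∀ x y, G x < G y ↔ π x < π y) ∨ (∀ x y, G x < G y ↔ π y < π x))
    (hGab : ∀ k, G (b k) < G (a k)) (hGlt : ∀ k l, k < l → G (a k) < G (b l)) :
    Nat.fib n ≤ Nat.card (C n) := by
  classical
  rcases n with _ | m
  · simp
  let f : Finset ℕ → Fin (m + 1) → Fin N := fun T i =>
    if h : 1 ≤ (i : ℕ) ∧ (i : ℕ) - 1 ∈ T then b ⟨(i : ℕ) - 1, by omega⟩ else a i
  have key := card_le_of_family hC hπ (ncSets m) f (by
    intro T _ i j hij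
    have hij' : (i : ℕ) < j := hij
    simp only [f]
    split_ifs with h1 h2 h2
    · refine lt_of_lt_of_le (hlt ⟨i - 1, by omega⟩ ⟨j - 1, by omega⟩ ?_) (hab _).le
      show (i : ℕ) - 1 < j - 1
      omega
    · exact hlt _ _ (show (i : ℕ) - 1 < j by omega)
    · rcases Nat.lt_or_ge i (j - 1) with h3 | h3
      · exact (hab _).trans ((hlt i ⟨j - 1, by omega⟩ h3).trans (hab _))
      · have : i = ⟨j - 1, by omega⟩ := Fin.ext (show (i : ℕ) = j - 1 by omega)
        rw [← this]
        exact hab i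
    · exact (hab i).trans (hlt i j hij)) (by
    have hrec : ∀ T ∈ ncSets m, ∀ i, ∀ hi : i < m,
        (i ∈ T ↔ G (f T ⟨i + 1, by omega⟩) < G (f T ⟨i, by omega⟩)) := by
      intro T hT i hi
      have hnc := ncSets_nc m T hT
      simp only [f]
      by_cases hiT : i ∈ T
      · have h1 : ¬ (1 ≤ i ∧ i - 1 ∈ T) := by
          rintro ⟨h1, h2⟩
          have := hnc _ h2
          rw [Nat.sub_add_cancel h1] at this
          exact this hiT
        simp only [Nat.add_sub_cancel, hiT, and_true, h1, dite_false, true_iff]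
        rw [dif_pos (by omega)]
        exact hGab _
      · simp only [Nat.add_sub_cancel, hiT, and_false, dite_false, false_iff, not_lt]
        have h3 : G (a ⟨i, by omega⟩) < G (a ⟨i + 1, by omega⟩) :=
          (hGlt ⟨i, by omega⟩ ⟨i + 1, by omega⟩ (by simp)).trans (hGab _)
        split_ifs with h1
        · refine le_of_lt (lt_trans (hGab _) (lt_trans (hGlt _ ⟨i + 1, by omega⟩ ?_) (hGab _)))
          show i - 1 < i + 1
          omega
        · exact h3.le
    intro S hS T hT hST
    have hSl := ncSets_lt m S hS
    have hTl := ncSets_lt m T hT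
    have hST' : ∀ i j, G (f S i) < G (f S j) ↔ G (f T i) < G (f T j) := by
      intro i j
      rcases hG with hG | hG
      · rw [hG, hG]; exact hST i j
      · rw [hG, hG]; exact hST j i
    ext i
    constructor
    · intro h
      have hi := hSl i h
      rw [hrec T hT i hi, ← hST', ← hrec S hS i hi]
      exact h
    · intro h
      have hi := hTl i h
      rw [hrec S hS i hi, hST', ← hrec T hT i hi]
      exact h)
  rw [ncSets_card] at key
  exact le_trans Nat.fib_le_fib_succ key


/-! ### Part 4: bounding the number of non-bonds -/

lemma interval_coloring {ι : Type*} (lo hi : ι → ℕ) (d : ℕ) (J : Finset ι) :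
    (∀ j ∈ J, lo j ≤ hi j) →
    (∀ T ⊆ J, ∀ x : ℕ, (∀ j ∈ T, lo j ≤ x ∧ x ≤ hi j) → T.card ≤ d) →
    ∃ c : ι → ℕ, (∀ j, c j ≤ d) ∧
      ∀ i ∈ J, ∀ j ∈ J, i ≠ j → c i = c j → hi i < lo j ∨ hi j < lo i := by
  classical
  induction J using Finset.induction_on_max_value lo with
  | empty => exact fun _ _ => ⟨fun _ => 0, fun _ => Nat.zero_le _, by simp⟩
  | insert a S ha hmax ih =>
    intro hle hd
    obtain ⟨c, hc, hcd⟩ := ih (fun j hj => hle j (by simp [hj]))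
      (fun T hT => hd T (hT.trans (Finset.subset_insert _ _)))
    let P := S.filter (fun j => lo a ≤ hi j)
    have hP : P.card ≤ d := hd P
      ((Finset.filter_subset _ _).trans (Finset.subset_insert _ _)) (lo a) (by
        intro j hj
        rw [Finset.mem_filter] at hj
        exact ⟨hmax j hj.1, hj.2⟩)
    have : ∃ k ∈ Finset.range (d + 1), k ∉ P.image c := by
      by_contra! hcon
      have h1 := Finset.card_le_card (show Finset.range (d + 1) ⊆ P.image c from hcon)
      have h2 := Finset.card_image_le (s := P) (f := c)
      rw [Finset.card_range] at h1
      omega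
    obtain ⟨k, hk, hkP⟩ := this
    have hak : ∀ j ∈ S, c j = k → hi j < lo a := by
      intro j hj hjk
      by_contra hcon
      exact hkP (Finset.mem_image.2 ⟨j, Finset.mem_filter.2 ⟨hj, by omega⟩, hjk⟩)
    refine ⟨Function.update c a k, ?_, ?_⟩
    · intro j
      by_cases hja : j = a
      · subst hja
        simp only [Function.update_self]
        simp at hk; omega
      · rw [Function.update_of_ne hja]
        exact hc j
    · intro i hi' j hj hij hcc
      by_cases hia : i = a
      · subst hia
        have hji : j ≠ i := fun h => hij h.symm
        have hjS : j ∈ S := by simpa [hji] using hj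
        rw [Function.update_self, Function.update_of_ne hji] at hcc
        exact Or.inr (hak j hjS hcc.symm)
      · have hiS : i ∈ S := by simpa [hia] using hi'
        by_cases hja : j = a
        · subst hja
          rw [Function.update_self, Function.update_of_ne hia] at hcc
          exact Or.inl (hak i hiS hcc)
        · have hjS : j ∈ S := by simpa [hja] using hj
          rw [Function.update_of_ne hja, Function.update_of_ne hia] at hcc
          exact hcd i hiS j hjS hij hcc

lemma color_class {ι : Type*} (J : Finset ι) (c : ι → ℕ) (d m : ℕ) (hc : ∀ j ∈ J, c j ≤ d)
    (hJ : (d + 1) * m ≤ J.card) : ∃ T ⊆ J, T.card = m ∧ ∀ i ∈ T, ∀ j ∈ T, c i = c j := by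
  classical
  obtain ⟨y, -, hy⟩ := Finset.exists_le_card_fiber_of_mul_le_card_of_maps_to
    (s := J) (t := Finset.range (d + 1)) (f := c) (n := m)
    (fun j hj => by have := hc j hj; simp; omega) ⟨0, by simp⟩ (by simpa using hJ)
  obtain ⟨T, hT, hTm⟩ := Finset.exists_subset_card_eq hy
  refine ⟨T, hT.trans (Finset.filter_subset _ _), hTm, fun i hi j hj => ?_⟩
  have h1 := (Finset.mem_filter.1 (hT hi)).2
  have h2 := (Finset.mem_filter.1 (hT hj)).2
  rw [h1, h2]

lemma interval_indep {ι : Type*} (lo hi : ι → ℕ) (d m : ℕ) (J : Finset ι)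
    (hle : ∀ j ∈ J, lo j ≤ hi j)
    (hd : ∀ T ⊆ J, ∀ x : ℕ, (∀ j ∈ T, lo j ≤ x ∧ x ≤ hi j) → T.card ≤ d)
    (hJ : (d + 1) * m ≤ J.card) :
    ∃ T ⊆ J, T.card = m ∧ ∀ i ∈ T, ∀ j ∈ T, i ≠ j → hi i < lo j ∨ hi j < lo i := by
  obtain ⟨c, hc, hcd⟩ := interval_coloring lo hi d J hle hd
  obtain ⟨T, hT, hTm, hTc⟩ := color_class J c d m (fun j _ => hc j) hJ
  exact ⟨T, hT, hTm, fun i hi j hj hij => hcd i (hT hi) j (hT hj) hij (hTc i hi j hj)⟩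

lemma es_coloring {ι : Type*} (p q : ι → ℕ) (J : Finset ι) :
    ∃ c : ι → ℕ, (∀ i ∈ J, ∃ T ⊆ J, T.card = c i + 1 ∧ i ∈ T ∧ (∀ t ∈ T, t ≠ i → q t < q i) ∧
        ∀ s ∈ T, ∀ t ∈ T, p s < p t → q s < q t) ∧
      (∀ i ∈ J, ∀ j ∈ J, p i < p j → q i < q j → c i < c j) := by
  classical
  induction J using Finset.induction_on_max_value p with
  | empty => exact ⟨fun _ => 0, by simp, by simp⟩
  | insert a S ha hmax ih =>
    obtain ⟨c, hc1, hc2⟩ := ih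
    let P := S.filter (fun j => q j < q a)
    let k := P.sup (fun j => c j + 1)
    have hchain : ∃ T ⊆ insert a S, T.card = k + 1 ∧ a ∈ T ∧ (∀ t ∈ T, t ≠ a → q t < q a) ∧
        ∀ s ∈ T, ∀ t ∈ T, p s < p t → q s < q t := by
      by_cases hP : P.Nonempty
      · obtain ⟨i, hiP, hik⟩ := Finset.exists_mem_eq_sup P hP (fun j => c j + 1)
        rw [Finset.mem_filter] at hiP
        obtain ⟨T, hTS, hTc, hiT, htop, hinc⟩ := hc1 i hiP.1
        have haT : a ∉ T := fun h => ha (hTS h)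
        have hTa : ∀ t ∈ T, q t < q a := by
          intro t ht
          by_cases hti : t = i
          · rw [hti]; exact hiP.2
          · exact (htop t ht hti).trans hiP.2
        refine ⟨insert a T, Finset.insert_subset_insert _ hTS, ?_, Finset.mem_insert_self _ _, ?_, ?_⟩
        · rw [Finset.card_insert_of_notMem haT, hTc]
          show _ = P.sup (fun j => c j + 1) + 1
          rw [hik]
        · intro t ht hta
          exact hTa t (by simpa [hta] using ht)
        · intro s hs t ht hst
          rcases Finset.mem_insert.1 hs with rfl | hs1
          · rcases Finset.mem_insert.1 ht with rfl | ht
            · omega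
            · have := hmax t (hTS ht); omega
          · rcases Finset.mem_insert.1 ht with rfl | ht
            · exact hTa s hs1
            · exact hinc s hs1 t ht hst
      · have hk : k = 0 := by
          simp only [k, Finset.not_nonempty_iff_eq_empty.1 hP, Finset.sup_empty]
          rfl
        refine ⟨{a}, by simp, by simp [hk], by simp, by simp, by simp⟩
    refine ⟨Function.update c a k, ?_, ?_⟩
    · intro i hi
      by_cases hia : i = a
      · subst hia
        simpa only [Function.update_self] using hchain
      · have hiS : i ∈ S := by simpa [hia] using hi
        rw [Function.update_of_ne hia]
        obtain ⟨T, hTS, h⟩ := hc1 i hiS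
        exact ⟨T, hTS.trans (Finset.subset_insert _ _), h⟩
    · intro i hi j hj hp hq
      by_cases hia : i = a
      · subst hia
        rcases Finset.mem_insert.1 hj with rfl | hj
        · omega
        · have := hmax j hj; omega
      · have hiS : i ∈ S := by simpa [hia] using hi
        rw [Function.update_of_ne hia]
        by_cases hja : j = a
        · subst hja
          rw [Function.update_self]
          have : c i + 1 ≤ k := Finset.le_sup (f := fun j => c j + 1)
            (Finset.mem_filter.2 ⟨hiS, hq⟩ : i ∈ P)
          omega
        · have hjS : j ∈ S := by simpa [hja] using hj
          rw [Function.update_of_ne hja]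
          exact hc2 i hiS j hjS hp hq

lemma erdos_szekeres {ι : Type*} (p q : ι → ℕ) (J : Finset ι) (m : ℕ)
    (hq : Set.InjOn q J) (hJ : (m + 1) * m ≤ J.card) :
    ∃ T ⊆ J, T.card = m ∧ ((∀ i ∈ T, ∀ j ∈ T, p i < p j → q i < q j) ∨
      (∀ i ∈ T, ∀ j ∈ T, p i < p j → q j < q i)) := by
  obtain ⟨c, hc1, hc2⟩ := es_coloring p q J
  by_cases h : ∀ j ∈ J, c j ≤ m
  · obtain ⟨T, hT, hTm, hTc⟩ := color_class J c m m h hJ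
    refine ⟨T, hT, hTm, Or.inr fun i hi j hj hp => ?_⟩
    by_contra hcon
    have hne : q i ≠ q j := by
      intro h
      have := hq (hT hi) (hT hj) h
      rw [this] at hp
      omega
    have := hc2 i (hT hi) j (hT hj) hp (by omega)
    have := hTc i hi j hj
    omega
  · push Not at h
    obtain ⟨j, hj, hcj⟩ := h
    obtain ⟨T, hTJ, hTc, -, -, hinc⟩ := hc1 j hj
    obtain ⟨U, hUT, hUm⟩ := Finset.exists_subset_card_eq (show m ≤ T.card by omega)
    exact ⟨U, hUT.trans hTJ, hUm, Or.inl fun i hi j hj => hinc i (hUT hi) j (hUT hj)⟩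

lemma depth_bound {C : ∀ n : ℕ, Set (Equiv.Perm (Fin n))} (hC : IsPermClass C)
    {N n : ℕ} (hn : Nat.card (C (n + 1)) < 2 ^ n)
    {π : Equiv.Perm (Fin N)} (hπ : π ∈ C N) {ι : Type*} (J : Finset ι)
    (pl ph vl vh : ι → ℕ)
    (hdis : ∀ i ∈ J, ∀ j ∈ J, i ≠ j → ph i < pl j ∨ ph j < pl i)
    (ha : ∀ j ∈ J, ∃ a : Fin N, pl j ≤ a ∧ a ≤ ph j ∧ (π a : ℕ) = vl j)
    (hb : ∀ j ∈ J, ∃ b : Fin N, pl j ≤ b ∧ b ≤ ph j ∧ (π b : ℕ) = vh j) :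
    ∀ T ⊆ J, ∀ x : ℕ, (∀ j ∈ T, vl j ≤ x ∧ x ≤ vh j) → T.card ≤ n := by
  classical
  intro T hT x hx
  by_contra! hcon
  have hxN : x < N := by
    obtain ⟨j, hj⟩ : T.Nonempty := Finset.card_pos.1 (by omega)
    obtain ⟨b, -, -, hb⟩ := hb j (hT hj)
    have := (hx j hj).2
    have := (π b).2
    omega
  obtain ⟨z, hz⟩ := π.surjective ⟨x, hxN⟩
  have hzx : (π z : ℕ) = x := by rw [hz]
  let B := T.filter (fun j => pl j ≤ z ∧ z ≤ ph j)
  have hB : B.card ≤ 1 := by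
    rw [Finset.card_le_one]
    intro i hi j hj
    rw [Finset.mem_filter] at hi hj
    by_contra hne
    have := hdis i (hT hi.1) j (hT hj.1) hne
    omega
  have hU : n ≤ (T \ B).card := by
    have := Finset.le_card_sdiff B T
    omega
  obtain ⟨U, hUT, hUn⟩ := Finset.exists_subset_card_eq hU
  have hUJ : ∀ j ∈ U, j ∈ J ∧ j ∈ T ∧ ((z : ℕ) < pl j ∨ ph j < z) := by
    intro j hj
    have h1 := Finset.mem_sdiff.1 (hUT hj)
    refine ⟨hT h1.1, h1.1, ?_⟩
    by_contra hc
    exact h1.2 (Finset.mem_filter.2 ⟨h1.1, by omega⟩)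
  have : ∀ j, ∃ a b : Fin N, j ∈ U → (pl j ≤ a ∧ a ≤ ph j ∧ (π a : ℕ) = vl j) ∧
      (pl j ≤ b ∧ b ≤ ph j ∧ (π b : ℕ) = vh j) := by
    intro j
    by_cases hj : j ∈ U
    · obtain ⟨a, h1⟩ := ha j (hUJ j hj).1
      obtain ⟨b, h2⟩ := hb j (hUJ j hj).1
      exact ⟨a, b, fun _ => ⟨h1, h2⟩⟩
    · exact ⟨z, z, fun h => absurd h hj⟩
  choose a b hab using this
  have := two_pow_le_of_cross hC hπ U hUn pl ph a b z
    (fun i hi j hj => hdis i (hUJ i hi).1 j (hUJ j hj).1)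
    (fun j hj => ⟨(hab j hj).1.1, (hab j hj).1.2.1⟩)
    (fun j hj => ⟨(hab j hj).2.1, (hab j hj).2.2.1⟩)
    (fun j hj => (hUJ j hj).2.2)
    (fun j hj => by
      have h1 := (hab j hj).1
      have h2 := hx j (hUJ j hj).2.1
      have h3 := (hUJ j hj).2.2
      have h4 : a j ≠ z := by
        rintro h
        have : (a j : ℕ) = z := by rw [h]
        omega
      have h5 : (π (a j) : ℕ) ≠ π z := fun h => h4 (π.injective (Fin.ext h))
      show (π (a j) : ℕ) < π z
      omega)
    (fun j hj => by
      have h1 := (hab j hj).2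
      have h2 := hx j (hUJ j hj).2.1
      have h3 := (hUJ j hj).2.2
      have h4 : b j ≠ z := by
        rintro h
        have : (b j : ℕ) = z := by rw [h]
        omega
      have h5 : (π (b j) : ℕ) ≠ π z := fun h => h4 (π.injective (Fin.ext h))
      show (π z : ℕ) < π (b j)
      omega)
  omega

/-- The inverse class. -/
def invClass (C : ∀ n : ℕ, Set (Equiv.Perm (Fin n))) : ∀ n : ℕ, Set (Equiv.Perm (Fin n)) :=
  fun n => {π | π⁻¹ ∈ C n}

lemma invClass_isPermClass {C : ∀ n : ℕ, Set (Equiv.Perm (Fin n))} (hC : IsPermClass C) :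
    IsPermClass (invClass C) := by
  rintro k n σ π hπ ⟨f, hf, h⟩
  refine hC k n _ _ hπ ⟨fun i => π (f (σ⁻¹ i)), ?_, ?_⟩
  · intro i j hij
    rw [← h]
    simpa using hij
  · intro i j
    simp [hf.lt_iff_lt]

lemma invClass_card (C : ∀ n : ℕ, Set (Equiv.Perm (Fin n))) (n : ℕ) :
    Nat.card (invClass C n) = Nat.card (C n) := by
  refine Nat.card_congr ((Equiv.inv (Equiv.Perm (Fin n))).subtypeEquiv fun π => ?_)
  rfl

/-- The set of positions `x` such that `x`, `x + 1` do not form a bond. -/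
noncomputable def nonBonds {N : ℕ} (π : Equiv.Perm (Fin N)) : Finset (Fin N) := by
  classical
  exact Finset.univ.filter fun x =>
    ∃ y : Fin N, (y : ℕ) = x + 1 ∧ (π y : ℕ) ≠ π x + 1 ∧ (π x : ℕ) ≠ π y + 1

lemma mem_nonBonds {N : ℕ} {π : Equiv.Perm (Fin N)} {x : Fin N} :
    x ∈ nonBonds π ↔ ∃ y : Fin N, (y : ℕ) = x + 1 ∧ (π y : ℕ) ≠ π x + 1 ∧ (π x : ℕ) ≠ π y + 1 := by
  simp [nonBonds]

lemma nonBonds_card_lt {C : ∀ n : ℕ, Set (Equiv.Perm (Fin n))} (hC : IsPermClass C)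
    {n : ℕ} (hn : Nat.card (C (n + 1)) < Nat.fib (n + 1))
    {N : ℕ} {π : Equiv.Perm (Fin N)} (hπ : π ∈ C N) :
    (nonBonds π).card < 2 * ((n + 1) * ((n + 1) * ((n + 2) * (n + 1)))) := by
  classical
  by_contra! hcon
  have hn2 : Nat.card (C (n + 1)) < 2 ^ n := lt_of_lt_of_le hn (fib_succ_le_two_pow n)
  -- next position and witness
  have hex : ∀ x : Fin N, ∃ y w : Fin N, x ∈ nonBonds π → (y : ℕ) = x + 1 ∧
      min (π x : ℕ) (π y) < π w ∧ (π w : ℕ) < max (π x : ℕ) (π y) := by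
    intro x
    by_cases hx : x ∈ nonBonds π
    · obtain ⟨y, hy, h1, h2⟩ := mem_nonBonds.1 hx
      have hxy : (π x : ℕ) ≠ π y := by
        intro h
        have := π.injective (Fin.ext h)
        rw [← this] at hy
        omega
      have hlt : min (π x : ℕ) (π y) + 1 < N := by
        have := (π x).2
        have := (π y).2
        omega
      obtain ⟨w, hw⟩ := π.surjective ⟨min (π x : ℕ) (π y) + 1, hlt⟩
      refine ⟨y, w, fun _ => ⟨hy, ?_⟩⟩
      rw [hw]
      simp only
      omega
    · exact ⟨x, x, fun h => absurd h hx⟩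
  choose y w hyw using hex
  obtain ⟨J0, hJ0, hJ0c, hpar⟩ := color_class (nonBonds π) (fun x => (x : ℕ) % 2) 1 _
    (fun j _ => by omega) hcon
  have hJ0' : ∀ j ∈ J0, _ := fun j hj => hyw j (hJ0 hj)
  let vl : Fin N → ℕ := fun x => min (π x : ℕ) (π (y x))
  let vh : Fin N → ℕ := fun x => max (π x : ℕ) (π (y x))
  have hvl : ∀ x, vl x = min (π x : ℕ) (π (y x)) := fun _ => rfl
  have hvh : ∀ x, vh x = max (π x : ℕ) (π (y x)) := fun _ => rfl
  have hd1 := depth_bound hC hn2 hπ J0 (fun x => (x : ℕ)) (fun x => (x : ℕ) + 1) vl vh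
    (by
      intro i hi j hj hij
      have := hpar i hi j hj
      have : (i : ℕ) ≠ j := fun h => hij (Fin.ext h)
      omega)
    (by
      intro j hj
      have := hJ0' j hj
      rcases le_total (π j : ℕ) (π (y j)) with h | h
      · exact ⟨j, by omega, by omega, by rw [hvl]; omega⟩
      · exact ⟨y j, by omega, by omega, by rw [hvl]; omega⟩)
    (by
      intro j hj
      have := hJ0' j hj
      rcases le_total (π j : ℕ) (π (y j)) with h | h
      · exact ⟨y j, by omega, by omega, by rw [hvh]; omega⟩
      · exact ⟨j, by omega, by omega, by rw [hvh]; omega⟩)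
  obtain ⟨J1, hJ1, hJ1c, hdis1⟩ := interval_indep vl vh n _ J0
    (fun j _ => by rw [hvl, hvh]; omega) hd1 hJ0c.ge
  have hJ1' : ∀ j ∈ J1, _ := fun j hj => hJ0' j (hJ1 hj)
  let pl : Fin N → ℕ := fun x => min (x : ℕ) (w x)
  let ph : Fin N → ℕ := fun x => max (y x : ℕ) (w x)
  have hpl : ∀ x, pl x = min (x : ℕ) (w x) := fun _ => rfl
  have hph : ∀ x, ph x = max (y x : ℕ) (w x) := fun _ => rfl
  have hπ' : π⁻¹ ∈ invClass C N := by simpa [invClass] using hπ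
  have hd2 := depth_bound (invClass_isPermClass hC) (by rwa [invClass_card]) hπ' J1 vl vh pl ph
    hdis1
    (by
      intro j hj
      have := hJ1' j hj
      rcases le_total (j : ℕ) (w j) with h | h
      · refine ⟨π j, ?_, ?_, ?_⟩
        · rw [hvl]; omega
        · rw [hvh]; omega
        · rw [hpl]; simp only [Equiv.Perm.coe_inv, Equiv.symm_apply_apply]; omega
      · refine ⟨π (w j), ?_, ?_, ?_⟩
        · rw [hvl]; omega
        · rw [hvh]; omega
        · rw [hpl]; simp only [Equiv.Perm.coe_inv, Equiv.symm_apply_apply]; omega)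
    (by
      intro j hj
      have := hJ1' j hj
      rcases le_total (y j : ℕ) (w j) with h | h
      · refine ⟨π (w j), ?_, ?_, ?_⟩
        · rw [hvl]; omega
        · rw [hvh]; omega
        · rw [hph]; simp only [Equiv.Perm.coe_inv, Equiv.symm_apply_apply]; omega
      · refine ⟨π (y j), ?_, ?_, ?_⟩
        · rw [hvl]; omega
        · rw [hvh]; omega
        · rw [hph]; simp only [Equiv.Perm.coe_inv, Equiv.symm_apply_apply]; omega)
  obtain ⟨J2, hJ2, hJ2c, hdis2⟩ := interval_indep pl ph n _ J1
    (fun j hj => by have := hJ1' j hj; rw [hpl, hph]; omega) hd2 hJ1c.ge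
  have hJ2' : ∀ j ∈ J2, _ := fun j hj => hJ1' j (hJ2 hj)
  have hvlh : ∀ j, vl j ≤ vh j := fun j => by rw [hvl, hvh]; omega
  have hplh : ∀ j ∈ J2, pl j ≤ ph j := fun j hj => by
    have := hJ2' j hj; rw [hpl, hph]; omega
  obtain ⟨J3, hJ3, hJ3c, hmono⟩ := erdos_szekeres pl vl J2 (n + 1) (by
    intro i hi j hj hij
    by_contra hne
    have := hdis1 i (hJ2 hi) j (hJ2 hj) hne
    have := hvlh i
    have := hvlh j
    omega) hJ2c.ge
  obtain ⟨e, heJ, -, hemono⟩ := exists_enum J3 pl (by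
    intro i hi j hj hij
    by_contra hne
    have := hdis2 i (hJ3 hi) j (hJ3 hj) hne
    have := hplh i (hJ3 hi)
    have := hplh j (hJ3 hj)
    omega) hJ3c
  have heJ2 : ∀ k, e k ∈ J2 := fun k => hJ3 (heJ k)
  have hepos : ∀ k l, k < l → ph (e k) < pl (e l) := by
    intro k l hkl
    have h1 : pl (e k) < pl (e l) := hemono hkl
    have h2 := hdis2 _ (heJ2 k) _ (heJ2 l) (by intro h; rw [h] at h1; omega)
    have := hplh _ (heJ2 k)
    have := hplh _ (heJ2 l)
    omega
  -- every box contains an inversion and a non-inversion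
  have hbox : ∀ j, j ∈ J2 → ∃ a b c d : Fin N,
      (pl j ≤ a ∧ a < b ∧ b ≤ ph j ∧ π b < π a ∧ vl j ≤ π b ∧ π a ≤ vh j) ∧
      (pl j ≤ c ∧ c < d ∧ d ≤ ph j ∧ π c < π d ∧ vl j ≤ π c ∧ π d ≤ vh j) := by
    intro j hj
    have hj' := hJ2' j hj
    have hjw : (j : ℕ) ≠ w j := by
      intro h
      have h := Fin.ext h
      rw [← h] at hj'
      omega
    have hyw' : (y j : ℕ) ≠ w j := by
      intro h
      have h := Fin.ext h
      rw [← h] at hj'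
      omega
    have e1 := hpl j
    have e2 := hph j
    have e3 := hvl j
    have e4 := hvh j
    have h0 : j < y j := show (j : ℕ) < y j by omega
    have h0' : (j : ℕ) < y j := h0
    simp only [Fin.lt_def]
    rcases lt_or_ge (π j : ℕ) (π (y j)) with h | h
    · rcases lt_or_gt_of_ne hyw' with h2 | h2
      · exact ⟨y j, w j, j, y j, by omega, by omega⟩
      · exact ⟨w j, j, j, y j, by omega, by omega⟩
    · rcases lt_or_gt_of_ne hyw' with h2 | h2
      · exact ⟨j, y j, y j, w j, by omega, by omega⟩
      · exact ⟨j, y j, w j, j, by omega, by omega⟩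
  have hbox' : ∀ k, _ := fun k => hbox (e k) (heJ2 k)
  choose a b c d hab hcd using hbox'
  have hfib : Nat.fib (n + 1) ≤ Nat.card (C (n + 1)) := by
    rcases hmono with hmono | hmono
    · have hval : ∀ k l, k < l → vh (e k) < vl (e l) := by
        intro k l hkl
        have h1 := hmono _ (heJ k) _ (heJ l) (hemono hkl)
        have h2 := hdis1 _ (hJ2 (heJ2 k)) _ (hJ2 (heJ2 l)) (by intro h; rw [h] at h1; omega)
        have := hvlh (e k)
        have := hvlh (e l)
        omega
      refine fib_le_of_sum hC hπ a b (fun k => (hab k).2.1) ?_ (fun x => ((π x : ℕ) : ℤ))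
        (Or.inl fun x y => by simp) ?_ ?_
      · intro k l hkl
        have := hepos k l hkl
        have := hab k
        have := hab l
        show (b k : ℕ) < a l
        omega
      · intro k
        have h := (hab k).2.2.2.1
        simpa using h
      · intro k l hkl
        have := hval k l hkl
        have := hab k
        have := hab l
        omega
    · have hval : ∀ k l, k < l → vh (e l) < vl (e k) := by
        intro k l hkl
        have h1 := hmono _ (heJ k) _ (heJ l) (hemono hkl)
        have h2 := hdis1 _ (hJ2 (heJ2 k)) _ (hJ2 (heJ2 l)) (by intro h; rw [h] at h1; omega)
        have := hvlh (e k)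
        have := hvlh (e l)
        omega
      refine fib_le_of_sum hC hπ c d (fun k => (hcd k).2.1) ?_ (fun x => -((π x : ℕ) : ℤ))
        (Or.inr fun x y => by simp) ?_ ?_
      · intro k l hkl
        have := hepos k l hkl
        have := hcd k
        have := hcd l
        show (d k : ℕ) < c l
        omega
      · intro k
        have h := (hcd k).2.2.2.1
        simpa using h
      · intro k l hkl
        have := hval k l hkl
        have := hcd k
        have := hcd l
        omega
  omega


/-! ### Part 5: the block decomposition -/

/-- The index of the block (maximal run of bonds) containing position `x`. -/
noncomputable def blk {N : ℕ} (π : Equiv.Perm (Fin N)) (x : Fin N) : ℕ :=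
  ((nonBonds π).filter (· < x)).card

lemma blk_mono {N : ℕ} (π : Equiv.Perm (Fin N)) : Monotone (blk π) := by
  intro x y hxy
  refine Finset.card_le_card fun z hz => ?_
  rw [Finset.mem_filter] at hz ⊢
  exact ⟨hz.1, lt_of_lt_of_le hz.2 hxy⟩

lemma blk_le {N : ℕ} (π : Equiv.Perm (Fin N)) (x : Fin N) : blk π x ≤ (nonBonds π).card :=
  Finset.card_le_card (Finset.filter_subset _ _)

lemma blk_zero {N : ℕ} (π : Equiv.Perm (Fin N)) (x : Fin N) (hx : (x : ℕ) = 0) : blk π x = 0 := by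
  unfold blk
  rw [Finset.card_eq_zero, Finset.filter_eq_empty_iff]
  intro z _ hz
  have : (z : ℕ) < x := hz
  omega

lemma blk_succ_mem {N : ℕ} {π : Equiv.Perm (Fin N)} {x y : Fin N} (hxy : (y : ℕ) = x + 1)
    (hx : x ∈ nonBonds π) : blk π y = blk π x + 1 := by
  classical
  unfold blk
  have : (nonBonds π).filter (· < y) = insert x ((nonBonds π).filter (· < x)) := by
    ext z
    simp only [Finset.mem_filter, Finset.mem_insert, Fin.lt_def, Fin.ext_iff]
    constructor
    · rintro ⟨h1, h2⟩
      rcases Nat.lt_or_ge z x with h | h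
      · exact Or.inr ⟨h1, h⟩
      · left; omega
    · rintro (h | ⟨h1, h2⟩)
      · have : z = x := Fin.ext h
        subst this
        exact ⟨hx, by omega⟩
      · exact ⟨h1, by omega⟩
  rw [this, Finset.card_insert_of_notMem (by simp)]

lemma blk_succ_notMem {N : ℕ} {π : Equiv.Perm (Fin N)} {x y : Fin N} (hxy : (y : ℕ) = x + 1)
    (hx : x ∉ nonBonds π) : blk π y = blk π x := by
  unfold blk
  congr 1
  ext z
  simp only [Finset.mem_filter, Fin.lt_def]
  constructor
  · rintro ⟨h1, h2⟩
    refine ⟨h1, ?_⟩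
    have : z ≠ x := fun h => hx (h ▸ h1)
    have : (z : ℕ) ≠ x := fun h => this (Fin.ext h)
    omega
  · rintro ⟨h1, h2⟩
    exact ⟨h1, by omega⟩

lemma blk_unique {N : ℕ} (π : Equiv.Perm (Fin N)) (g : Fin N → ℕ)
    (h0 : ∀ x : Fin N, (x : ℕ) = 0 → g x = 0)
    (h1 : ∀ x y : Fin N, (y : ℕ) = x + 1 → x ∈ nonBonds π → g y = g x + 1)
    (h2 : ∀ x y : Fin N, (y : ℕ) = x + 1 → x ∉ nonBonds π → g y = g x) (x : Fin N) :
    blk π x = g x := by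
  obtain ⟨k, hk⟩ := x
  induction k with
  | zero => rw [h0 _ rfl, blk_zero _ _ rfl]
  | succ k ih =>
    have ih' := ih (by omega)
    by_cases hx : (⟨k, by omega⟩ : Fin N) ∈ nonBonds π
    · rw [h1 ⟨k, by omega⟩ _ rfl hx, blk_succ_mem (x := ⟨k, by omega⟩) rfl hx, ih']
    · rw [h2 ⟨k, by omega⟩ _ rfl hx, blk_succ_notMem (x := ⟨k, by omega⟩) rfl hx, ih']

lemma bond_of_blk_eq {N : ℕ} {π : Equiv.Perm (Fin N)} {x y : Fin N} (hxy : (y : ℕ) = x + 1)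
    (h : blk π x = blk π y) : (π y : ℕ) = π x + 1 ∨ (π x : ℕ) = π y + 1 := by
  by_contra! hcon
  have := blk_succ_mem hxy (mem_nonBonds.2 ⟨y, hxy, hcon⟩)
  omega

lemma blk_run {N : ℕ} (π : Equiv.Perm (Fin N)) (x : Fin N) (k : ℕ) :
    ∀ y : Fin N, (y : ℕ) = x + k → blk π x = blk π y →
      ∃ ε : ℤ, (ε = 1 ∨ ε = -1) ∧ ∀ z : Fin N, x ≤ z → z ≤ y →
        ((π z : ℕ) : ℤ) = (π x : ℕ) + ε * ((z : ℕ) - (x : ℕ)) := by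
  induction k with
  | zero =>
    intro y hy _
    refine ⟨1, Or.inl rfl, fun z h1 h2 => ?_⟩
    have h1' : (x : ℕ) ≤ z := h1
    have h2' : (z : ℕ) ≤ y := h2
    have : z = x := Fin.ext (by omega)
    subst this
    simp
  | succ k ih =>
    intro y hy hb
    let y' : Fin N := ⟨x + k, by have := y.2; omega⟩
    have hy' : (y' : ℕ) = x + k := rfl
    have h1 : blk π x ≤ blk π y' := blk_mono π (show (x : ℕ) ≤ y' by omega)
    have h2 : blk π y' ≤ blk π y := blk_mono π (show (y' : ℕ) ≤ y by omega)
    have hb' : blk π y' = blk π y := by omega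
    obtain ⟨ε, hε, hz⟩ := ih y' hy' (by omega)
    have hbond := bond_of_blk_eq (show (y : ℕ) = y' + 1 by omega) hb'
    have hy'val := hz y' (show (x : ℕ) ≤ y' by omega) le_rfl
    -- it suffices to find the sign
    suffices h : ∃ δ : ℤ, (δ = 1 ∨ δ = -1) ∧ ((π y : ℕ) : ℤ) = (π y' : ℕ) + δ ∧
        (k = 0 ∨ δ = ε) by
      obtain ⟨δ, hδ, hy1, hk⟩ := h
      refine ⟨δ, hδ, fun z h3 h4 => ?_⟩
      have h3' : (x : ℕ) ≤ z := h3
      have h4' : (z : ℕ) ≤ y := h4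
      rcases Nat.lt_or_ge z y with h5 | h5
      · have h6 := hz z h3 (show (z : ℕ) ≤ y' by omega)
        rcases hk with hk | hk
        · have : z = x := Fin.ext (by omega)
          subst this
          simp
        · rw [hk]; exact h6
      · have : z = y := Fin.ext (by omega)
        subst this
        rw [hy1, hy'val, hy, hy']
        rcases hk with hk | hk
        · subst hk; simp
        · rw [hk]; push_cast; ring
    rcases Nat.eq_zero_or_pos k with hk | hk
    · rcases hbond with h | h
      · exact ⟨1, Or.inl rfl, by omega, Or.inl hk⟩
      · exact ⟨-1, Or.inr rfl, by omega, Or.inl hk⟩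
    · refine ⟨ε, hε, ?_, Or.inr rfl⟩
      let y'' : Fin N := ⟨x + (k - 1), by have := y.2; omega⟩
      have hy'' : (y'' : ℕ) = x + (k - 1) := rfl
      have h7 := hz y'' (show (x : ℕ) ≤ y'' by omega) (show (y'' : ℕ) ≤ y' by omega)
      have h8 : (π y'' : ℕ) ≠ π y := by
        intro h
        have := congrArg Fin.val (π.injective (Fin.ext h))
        omega
      rcases hε with rfl | rfl <;> omega

lemma exists_first {N : ℕ} (π : Equiv.Perm (Fin N)) (x : Fin N) :
    ∃ q, blk π q = blk π x ∧ ∀ z, blk π z = blk π x → q ≤ z := by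
  classical
  let B := Finset.univ.filter fun z => blk π z = blk π x
  have hB : B.Nonempty := ⟨x, by simp [B]⟩
  refine ⟨B.min' hB, ?_, fun z hz => B.min'_le z (by simp [B, hz])⟩
  have := B.min'_mem hB
  simpa [B] using this

lemma exists_last {N : ℕ} (π : Equiv.Perm (Fin N)) (x : Fin N) :
    ∃ q, blk π q = blk π x ∧ ∀ z, blk π z = blk π x → z ≤ q := by
  classical
  let B := Finset.univ.filter fun z => blk π z = blk π x
  have hB : B.Nonempty := ⟨x, by simp [B]⟩
  refine ⟨B.max' hB, ?_, fun z hz => B.le_max' z (by simp [B, hz])⟩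
  have := B.max'_mem hB
  simpa [B] using this

lemma blk_sign {N : ℕ} (π : Equiv.Perm (Fin N)) (x : Fin N) :
    ∃ ε : ℤ, (ε = 1 ∨ ε = -1) ∧ ∀ z w : Fin N, blk π z = blk π x → blk π w = blk π x →
        ((π z : ℕ) : ℤ) - (π w : ℕ) = ε * ((z : ℕ) - (w : ℕ)) := by
  obtain ⟨q, hq, hq'⟩ := exists_first π x
  obtain ⟨l, hl, hl'⟩ := exists_last π x
  have hql : (q : ℕ) ≤ l := hl' q hq
  obtain ⟨ε, hε, h⟩ := blk_run π q (l - q) l (by omega) (by omega)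
  refine ⟨ε, hε, fun z w hz hw => ?_⟩
  rw [h z (hq' z hz) (hl' z hz), h w (hq' w hw) (hl' w hw)]
  ring

lemma blk_between {N : ℕ} {π : Equiv.Perm (Fin N)} {x y z : Fin N} (hxy : blk π x = blk π y)
    (h1 : (x : ℕ) ≤ z) (h2 : (z : ℕ) ≤ y) : blk π z = blk π x := by
  have h3 : blk π x ≤ blk π z := blk_mono π h1
  have h4 : blk π z ≤ blk π y := blk_mono π h2
  omega

/-- Blocks are value intervals. -/
lemma blk_val_between {N : ℕ} {π : Equiv.Perm (Fin N)} {z w u : Fin N} (hzw : blk π w = blk π z)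
    (h1 : π z < π u) (h2 : π u < π w) : blk π u = blk π z := by
  obtain ⟨ε, hε, h⟩ := blk_sign π z
  have h3 := h w z hzw rfl
  have h1' : (π z : ℕ) < π u := h1
  have h2' : (π u : ℕ) < π w := h2
  rcases hε with rfl | rfl
  · let p : Fin N := ⟨z + (π u - π z), by have := w.2; omega⟩
    have hp : (p : ℕ) = z + (π u - π z) := rfl
    have hpb : blk π p = blk π z := blk_between (y := w) hzw.symm (by omega) (by omega)
    have h4 := h p z hpb rfl
    have : p = u := π.injective (Fin.ext (by omega))
    rw [← this, hpb]
  · let p : Fin N := ⟨z - (π u - π z), by have := z.2; omega⟩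
    have hp : (p : ℕ) = z - (π u - π z) := rfl
    have hpb : blk π p = blk π w := blk_between (y := z) hzw (by omega) (by omega)
    have h4 := h p z (hpb.trans hzw) rfl
    have : p = u := π.injective (Fin.ext (by omega))
    rw [← this, hpb, hzw]

lemma blk_unif_aux {N : ℕ} {π : Equiv.Perm (Fin N)} {z w u : Fin N} (hzw : blk π z = blk π w)
    (hu : blk π u ≠ blk π z) : π z < π u ↔ π w < π u := by
  have key : ∀ z w : Fin N, blk π z = blk π w → blk π u ≠ blk π z → π z < π u → π w < π u := by
    intro z w hzw hu h
    by_contra hcon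
    rcases lt_or_eq_of_le (not_lt.1 hcon) with h2 | h2
    · exact hu (blk_val_between hzw.symm h h2)
    · exact hu (by rw [π.injective h2, hzw])
  exact ⟨key z w hzw hu, key w z hzw.symm (hzw ▸ hu)⟩

lemma blk_unif {N : ℕ} {π : Equiv.Perm (Fin N)} {z w u v : Fin N} (hzw : blk π z = blk π w)
    (huv : blk π u = blk π v) (hu : blk π u ≠ blk π z) : π z < π u ↔ π w < π v := by
  rw [blk_unif_aux hzw hu]
  have h1 : ∀ a b : Fin N, blk π a ≠ blk π b → (π a < π b ↔ ¬ π b < π a) := by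
    intro a b hab
    have : π a ≠ π b := fun h => hab (by rw [π.injective h])
    constructor
    · exact fun h => h.asymm
    · exact fun h => lt_of_le_of_ne (not_lt.1 h) this
  rw [h1 w u (by rw [← hzw]; exact hu.symm), h1 w v (by rw [← hzw, ← huv]; exact hu.symm),
    blk_unif_aux huv (by rw [← hzw]; exact hu.symm)]

/-- Restricting to a set containing the extreme points of all blocks keeps the blocks. -/
lemma blk_restrict {N n : ℕ} {π : Equiv.Perm (Fin N)} {σ : Equiv.Perm (Fin n)}
    (f : Fin n → Fin N) (hf : StrictMono f) (hσ : ∀ i j, σ i < σ j ↔ π (f i) < π (f j))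
    (hfirst : ∀ q, (∀ z, blk π z = blk π q → q ≤ z) → ∃ i, f i = q)
    (hlast : ∀ q, (∀ z, blk π z = blk π q → z ≤ q) → ∃ i, f i = q) (x : Fin n) :
    blk σ x = blk π (f x) := by
  have hflt : ∀ i j : Fin n, (f i : ℕ) < f j ↔ (i : ℕ) < j := fun i j => hf.lt_iff_lt
  have hσ' : ∀ i j : Fin n, (σ i : ℕ) < σ j ↔ (π (f i) : ℕ) < π (f j) := hσ
  -- characterization of the nonbonds of σ
  have hsame : ∀ x y : Fin n, (y : ℕ) = x + 1 → blk π (f x) = blk π (f y) → x ∉ nonBonds σ := by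
    intro x y hxy hb hmem
    obtain ⟨y', hy', h1, h2⟩ := mem_nonBonds.1 hmem
    have : y' = y := Fin.ext (by omega)
    subst this
    have hne : (σ x : ℕ) ≠ σ y' := by
      intro h
      have := congrArg Fin.val (σ.injective (Fin.ext h))
      omega
    have hlt : min (σ x : ℕ) (σ y') + 1 < n := by
      have := (σ x).2
      have := (σ y').2
      omega
    obtain ⟨u, hu⟩ := σ.surjective ⟨min (σ x : ℕ) (σ y') + 1, hlt⟩
    have hu' : (σ u : ℕ) = min (σ x : ℕ) (σ y') + 1 := by rw [hu]
    have a1 := hσ' x u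
    have a2 := hσ' u y'
    have a3 := hσ' u x
    have a4 := hσ' y' u
    obtain ⟨ε, hε, h⟩ := blk_sign π (f x)
    have hub : blk π (f u) = blk π (f x) := by
      rcases lt_or_ge (σ x : ℕ) (σ y') with h3 | h3
      · exact blk_val_between hb.symm (Fin.lt_def.2 (by omega)) (Fin.lt_def.2 (by omega : (π (f u) : ℕ) < π (f y')))
      · rw [hb]
        exact blk_val_between hb (Fin.lt_def.2 (by omega)) (Fin.lt_def.2 (by omega : (π (f u) : ℕ) < π (f x)))
    have b1 := h (f u) (f x) hub rfl
    have b2 := h (f y') (f x) hb.symm rfl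
    have c1 := hflt x u
    have c2 := hflt u y'
    have c3 := hflt u x
    have c4 := hflt y' u
    have c5 := hflt x y'
    rcases hε with rfl | rfl <;> omega
  have hdiff : ∀ x y : Fin n, (y : ℕ) = x + 1 → blk π (f x) ≠ blk π (f y) →
      x ∈ nonBonds σ ∧ blk π (f y) = blk π (f x) + 1 := by
    intro x y hxy hb
    have hfxy : (f x : ℕ) < f y := (hflt x y).2 (by omega)
    have hble : blk π (f x) ≤ blk π (f y) := blk_mono π hfxy.le
    -- nothing strictly between in the range
    have hnone : ∀ i, ¬ ((f x : ℕ) < f i ∧ (f i : ℕ) < f y) := by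
      intro i
      rw [hflt, hflt]
      omega
    obtain ⟨l, hl, hl'⟩ := exists_last π (f x)
    obtain ⟨il, hil⟩ := hlast l (fun z hz => hl' z (hz.trans hl))
    have hxl : (f x : ℕ) ≤ l := hl' _ rfl
    have hly : (l : ℕ) < f y := by
      by_contra hcon
      have : blk π (f y) ≤ blk π l := blk_mono π (show (f y : ℕ) ≤ l by omega)
      omega
    have hlx : l = f x := by
      have := hnone il
      rw [hil] at this
      exact Fin.ext (by omega)
    let m : Fin N := ⟨f x + 1, by have := (f y).2; omega⟩
    have hm : (m : ℕ) = f x + 1 := rfl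
    have hbm : blk π m ≠ blk π (f x) := by
      intro h
      have : (m : ℕ) ≤ l := hl' m h
      rw [hlx] at this
      omega
    have hNB : f x ∈ nonBonds π := by
      by_contra h
      exact hbm (blk_succ_notMem hm h)
    have hbm1 := blk_succ_mem hm hNB
    obtain ⟨im, him⟩ := hfirst m (by
      intro z hz
      by_contra hcon
      have h1 : ¬ (m : ℕ) ≤ z := hcon
      have : blk π z ≤ blk π (f x) := blk_mono π (show (z : ℕ) ≤ f x by omega)
      omega)
    have hmy : m = f y := by
      have := hnone im
      rw [him] at this
      exact Fin.ext (by omega)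
    refine ⟨?_, by rw [← hmy, hbm1]⟩
    rw [hmy] at hm
    obtain ⟨y', hy', h1, h2⟩ := mem_nonBonds.1 hNB
    have : y' = f y := Fin.ext (by omega)
    subst this
    have hne : (π (f x) : ℕ) ≠ π (f y) := by
      intro h
      have := congrArg Fin.val (π.injective (Fin.ext h))
      omega
    have hlt : min (π (f x) : ℕ) (π (f y)) + 1 < N := by
      have := (π (f x)).2
      have := (π (f y)).2
      omega
    obtain ⟨p, hp⟩ := π.surjective ⟨min (π (f x) : ℕ) (π (f y)) + 1, hlt⟩
    have hp' : (π p : ℕ) = min (π (f x) : ℕ) (π (f y)) + 1 := by rw [hp]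
    have hpx : (p : ℕ) ≠ f x := by
      intro h
      have h := Fin.ext h
      rw [h] at hp'
      omega
    have hpy : (p : ℕ) ≠ f y := by
      intro h
      have h := Fin.ext h
      rw [h] at hp'
      omega
    -- a point of the range strictly between in value
    have hbet : ∃ i, min (π (f x) : ℕ) (π (f y)) < π (f i) ∧
        (π (f i) : ℕ) < max (π (f x) : ℕ) (π (f y)) := by
      obtain ⟨q, hq, hq'⟩ := exists_first π p
      obtain ⟨r, hr, hr'⟩ := exists_last π p
      obtain ⟨iq, hiq⟩ := hfirst q (fun z hz => hq' z (hz.trans hq))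
      obtain ⟨ir, hir⟩ := hlast r (fun z hz => hr' z (hz.trans hr))
      have hqp : (q : ℕ) ≤ p := hq' p rfl
      have hpr : (p : ℕ) ≤ r := hr' p rfl
      obtain ⟨ε, hε, h⟩ := blk_sign π p
      have e1 := h q p hq rfl
      have e2 := h r p hr rfl
      by_cases hbx : blk π p = blk π (f x)
      · have hpl : p ≤ l := hl' p hbx
        have hpl' : (p : ℕ) ≤ f x := by rw [hlx] at hpl; exact hpl
        have e3 := h (f x) p hbx.symm rfl
        have hne' : blk π (f y) ≠ blk π p := by rw [hbx]; exact hb.symm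
        have u1 : (π p : ℕ) < π (f y) ↔ (π q : ℕ) < π (f y) := blk_unif hq.symm rfl hne'
        have u2 : (π (f y) : ℕ) < π p ↔ (π (f y) : ℕ) < π q := blk_unif rfl hq.symm hne'.symm
        refine ⟨iq, ?_⟩
        rw [hiq]
        rcases hε with rfl | rfl <;> omega
      · by_cases hby : blk π p = blk π (f y)
        · have hpy' : (f y : ℕ) ≤ p := by
            by_contra hcon
            have : blk π p ≤ blk π (f x) := blk_mono π (show (p : ℕ) ≤ f x by omega)
            omega
          have e3 := h (f y) p hby.symm rfl
          have hne' : blk π (f x) ≠ blk π p := by rw [hby]; exact hb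
          have u1 : (π p : ℕ) < π (f x) ↔ (π r : ℕ) < π (f x) := blk_unif hr.symm rfl hne'
          have u2 : (π (f x) : ℕ) < π p ↔ (π (f x) : ℕ) < π r := blk_unif rfl hr.symm hne'.symm
          refine ⟨ir, ?_⟩
          rw [hir]
          rcases hε with rfl | rfl <;> omega
        · have hbx' : blk π (f x) ≠ blk π p := Ne.symm hbx
          have hby' : blk π (f y) ≠ blk π p := Ne.symm hby
          have u1 : (π p : ℕ) < π (f x) ↔ (π q : ℕ) < π (f x) := blk_unif hq.symm rfl hbx'
          have u2 : (π (f x) : ℕ) < π p ↔ (π (f x) : ℕ) < π q := blk_unif rfl hq.symm hbx'.symm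
          have u3 : (π p : ℕ) < π (f y) ↔ (π q : ℕ) < π (f y) := blk_unif hq.symm rfl hby'
          have u4 : (π (f y) : ℕ) < π p ↔ (π (f y) : ℕ) < π q := blk_unif rfl hq.symm hby'.symm
          refine ⟨iq, ?_⟩
          rw [hiq]
          omega
    obtain ⟨i, hi⟩ := hbet
    refine mem_nonBonds.2 ⟨y, hxy, ?_⟩
    have a1 := hσ' x i
    have a2 := hσ' i y
    have a3 := hσ' i x
    have a4 := hσ' y i
    have a5 := hσ' x y
    omega
  refine blk_unique σ (fun x => blk π (f x)) ?_ ?_ ?_ x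
  · intro x hx
    obtain ⟨i, hi⟩ := hfirst ⟨0, by have := (f x).2; omega⟩ (fun z _ => Nat.zero_le z)
    refine blk_zero π _ ?_
    have h1 : (f x : ℕ) ≤ f i := hf.monotone (show (x : ℕ) ≤ i by omega)
    rw [hi] at h1
    simp only at h1
    omega
  · intro x y hxy hmem
    exact (hdiff x y hxy (fun h => hsame x y hxy h hmem)).2
  · intro x y hxy hmem
    by_contra hcon
    exact hmem (hdiff x y hxy (fun h => hcon h.symm)).1


/-- A lower set of `Fin n` is determined by its cardinality. -/
lemma mem_lower_iff {n : ℕ} (S : Finset (Fin n)) (hS : ∀ x y : Fin n, x ≤ y → y ∈ S → x ∈ S)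
    (x : Fin n) : x ∈ S ↔ (x : ℕ) < S.card := by
  constructor
  · intro hx
    have h : Finset.Iic x ⊆ S := fun z hz => hS z x (Finset.mem_Iic.1 hz) hx
    have := Finset.card_le_card h
    rw [Fin.card_Iic] at this
    omega
  · intro hx
    by_contra hcon
    have h : S ⊆ Finset.Iio x := fun z hz => by
      rw [Finset.mem_Iio]
      by_contra hz'
      exact hcon (hS x z (not_lt.1 hz') hz)
    have := Finset.card_le_card h
    rw [Fin.card_Iio] at this
    omega

lemma card_filter_lt_eq_sum {n : ℕ} (g : Fin n → ℕ) (i : ℕ) :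
    (Finset.univ.filter fun x => g x < i).card
      = ∑ j ∈ Finset.range i, (Finset.univ.filter fun x => g x = j).card := by
  rw [Finset.card_eq_sum_card_fiberwise (f := g) (t := Finset.range i)]
  · refine Finset.sum_congr rfl fun j hj => ?_
    congr 1
    ext x
    simp only [Finset.mem_filter, Finset.mem_univ, true_and, Finset.mem_range] at hj ⊢
    constructor
    · exact fun h => h.2
    · exact fun h => ⟨by omega, h⟩
  · intro x hx
    simpa using hx

lemma mono_eq_of_fibers {n : ℕ} (g h : Fin n → ℕ) (hg : Monotone g) (hh : Monotone h)
    (heq : ∀ j, (Finset.univ.filter fun x => g x = j).card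
      = (Finset.univ.filter fun x => h x = j).card) : g = h := by
  have key : ∀ x i, g x < i ↔ h x < i := by
    intro x i
    have h1 := mem_lower_iff (Finset.univ.filter fun x => g x < i)
      (fun a b hab hb => by
        simp only [Finset.mem_filter, Finset.mem_univ, true_and] at hb ⊢
        exact lt_of_le_of_lt (hg hab) hb) x
    have h2 := mem_lower_iff (Finset.univ.filter fun x => h x < i)
      (fun a b hab hb => by
        simp only [Finset.mem_filter, Finset.mem_univ, true_and] at hb ⊢
        exact lt_of_le_of_lt (hh hab) hb) x
    rw [card_filter_lt_eq_sum, Finset.sum_congr rfl fun j _ => heq j,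
      ← card_filter_lt_eq_sum] at h1
    simp only [Finset.mem_filter, Finset.mem_univ, true_and] at h1 h2
    rw [h1, h2]
  ext x
  have h1 := key x (g x + 1)
  have h2 := key x (h x + 1)
  omega

/-- Block lengths. -/
noncomputable def ell (K : ℕ) {n : ℕ} (π : Equiv.Perm (Fin n)) (i : Fin K) : ℕ :=
  (Finset.univ.filter fun x => blk π x = (i : ℕ)).card

lemma ell_sum {K n : ℕ} (π : Equiv.Perm (Fin n)) (hK : ∀ x, blk π x < K) :
    ∑ i, ell K π i = n := by
  have := Finset.card_eq_sum_card_fiberwise (s := (Finset.univ : Finset (Fin n)))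
    (f := fun x => (⟨blk π x, hK x⟩ : Fin K)) (t := Finset.univ) (fun _ _ => Finset.mem_univ _)
  rw [Finset.card_univ, Fintype.card_fin] at this
  refine Eq.trans ?_ this.symm
  refine Finset.sum_congr rfl fun i _ => ?_
  unfold ell
  congr 1
  ext x
  simp [Fin.ext_iff]

/-- The comparison relation between blocks. -/
def brel (K : ℕ) {n : ℕ} (π : Equiv.Perm (Fin n)) (i j : Fin K) : Prop :=
  ∃ x y, blk π x = i ∧ blk π y = j ∧ (i = j → x < y) ∧ π x < π y

lemma brel_spec {K n : ℕ} {π : Equiv.Perm (Fin n)} {x y : Fin n} {i j : Fin K}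
    (hx : blk π x = i) (hy : blk π y = j) (hxy : i = j → x < y) :
    π x < π y ↔ brel K π i j := by
  constructor
  · exact fun h => ⟨x, y, hx, hy, hxy, h⟩
  · rintro ⟨z, w, hz, hw, hzw, h⟩
    by_cases hij : i = j
    · obtain ⟨ε, hε, hs⟩ := blk_sign π x
      have h1 := hs z w (by omega) (by rw [hw, hx, hij])
      have h2 := hs x y rfl (by rw [hy, hx, hij])
      have h3 : (x : ℕ) < y := hxy hij
      have h4 : (z : ℕ) < w := hzw hij
      have h5 : (π z : ℕ) < π w := h
      show (π x : ℕ) < π y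
      rcases hε with rfl | rfl <;> omega
    · refine (blk_unif (z := z) (w := x) (u := w) (v := y) (by omega) (by omega) ?_).1 h
      intro hcon
      apply hij
      ext
      omega

lemma perm_eq_of_data {K n : ℕ} {π σ : Equiv.Perm (Fin n)} (hπ : ∀ x, blk π x < K)
    (hσ : ∀ x, blk σ x < K) (hell : ell K π = ell K σ) (hr : brel K π = brel K σ) : π = σ := by
  have hblk : blk π = blk σ := by
    refine mono_eq_of_fibers _ _ (blk_mono π) (blk_mono σ) fun j => ?_
    by_cases hj : j < K
    · exact congrFun hell ⟨j, hj⟩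
    · rw [Finset.filter_false_of_mem, Finset.filter_false_of_mem]
      · intro x _ h
        have := hσ x
        omega
      · intro x _ h
        have := hπ x
        omega
  have key : ∀ x y : Fin n, x < y → (π x < π y ↔ σ x < σ y) := by
    intro x y hxy
    rw [brel_spec (i := ⟨blk π x, hπ x⟩) (j := ⟨blk π y, hπ y⟩) rfl rfl (fun _ => hxy), hr,
      ← brel_spec (congrFun hblk x).symm (congrFun hblk y).symm (fun _ => hxy)]
  refine perm_ext_lt fun x y => ?_
  rcases lt_trichotomy x y with h | h | h
  · exact key x y h
  · subst h
    simp
  · have h1 := key y x h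
    have h2 : π x ≠ π y := fun e => (ne_of_gt h) (π.injective e)
    have h3 : σ x ≠ σ y := fun e => (ne_of_gt h) (σ.injective e)
    rw [← not_le, ← not_le, not_iff_not, le_iff_lt_or_eq, le_iff_lt_or_eq, h1]
    simp [h2.symm, h3.symm]

lemma restrict_data {K n : ℕ} {π : Equiv.Perm (Fin n)} (hπ : ∀ x, blk π x < K)
    (l : Fin K → ℕ) (h1 : ∀ i, l i ≤ ell K π i) (h2 : ∀ i, min (ell K π i) 2 ≤ l i) :
    ∃ (m : ℕ) (σ : Equiv.Perm (Fin m)), PermContains σ π ∧ ell K σ = l ∧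
      brel K σ = brel K π := by
  classical
  have hX : ∀ i : Fin K, ∃ X : Finset (Fin n), (∀ x ∈ X, blk π x = i) ∧ X.card = l i ∧
      ∀ q, blk π q = i → ((∀ z, blk π z = blk π q → q ≤ z) ∨ (∀ z, blk π z = blk π q → z ≤ q)) →
        q ∈ X := by
    intro i
    let B := Finset.univ.filter fun x => blk π x = (i : ℕ)
    let Ex := B.filter fun q => (∀ z, blk π z = blk π q → q ≤ z) ∨ (∀ z, blk π z = blk π q → z ≤ q)
    have hEB : Ex ⊆ B := Finset.filter_subset _ _
    have hBm : ∀ x, x ∈ B ↔ blk π x = i := fun x => by simp [B]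
    have hE2 : Ex.card ≤ 2 := by
      by_cases hne : Ex.Nonempty
      · obtain ⟨x, hx⟩ := hne
        have hxb := (hBm x).1 (hEB hx)
        obtain ⟨q, hq, hq'⟩ := exists_first π x
        obtain ⟨r, hr, hr'⟩ := exists_last π x
        have : Ex ⊆ {q, r} := by
          intro y hy
          have hyb := (hBm y).1 (hEB hy)
          rw [Finset.mem_insert, Finset.mem_singleton]
          rcases (Finset.mem_filter.1 hy).2 with h | h
          · left
            exact le_antisymm (h q (by omega)) (hq' y (by omega))
          · right
            exact le_antisymm (hr' y (by omega)) (h r (by omega))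
        exact (Finset.card_le_card this).trans Finset.card_le_two
      · rw [Finset.not_nonempty_iff_eq_empty] at hne
        simp [hne]
    have hEl : Ex.card ≤ l i := le_trans (le_min (Finset.card_le_card hEB) hE2) (h2 i)
    obtain ⟨X, hEX, hXB, hXc⟩ := Finset.exists_subsuperset_card_eq hEB hEl (h1 i)
    exact ⟨X, fun x hx => (hBm x).1 (hXB hx), hXc, fun q hq hq' =>
      hEX (Finset.mem_filter.2 ⟨(hBm q).2 hq, hq'⟩)⟩
  choose X hX1 hX2 hX3 using hX
  let Y := Finset.univ.biUnion X
  have hYm : ∀ x, x ∈ Y ↔ x ∈ X ⟨blk π x, hπ x⟩ := by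
    intro x
    simp only [Y, Finset.mem_biUnion, Finset.mem_univ, true_and]
    constructor
    · rintro ⟨i, hi⟩
      have : (⟨blk π x, hπ x⟩ : Fin K) = i := Fin.ext (hX1 i x hi)
      rwa [this]
    · exact fun h => ⟨_, h⟩
  let f : Fin Y.card → Fin n := fun i => Y.orderEmbOfFin rfl i
  have hf : StrictMono f := (Y.orderEmbOfFin rfl).strictMono
  have hfr : ∀ x, x ∈ Y → ∃ i, f i = x := by
    intro x hx
    have := Finset.range_orderEmbOfFin Y rfl
    have hx' : x ∈ Set.range (Y.orderEmbOfFin rfl) := by rw [this]; exact hx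
    exact hx'
  have hfY : ∀ i, f i ∈ Y := fun i => Finset.orderEmbOfFin_mem _ _ _
  obtain ⟨σ, hσ⟩ := exists_std (fun i => π (f i)) (fun a b h => hf.injective (π.injective h))
  have hfirst : ∀ q, (∀ z, blk π z = blk π q → q ≤ z) → ∃ i, f i = q := fun q hq =>
    hfr q ((hYm q).2 (hX3 _ q rfl (Or.inl hq)))
  have hlast : ∀ q, (∀ z, blk π z = blk π q → z ≤ q) → ∃ i, f i = q := fun q hq =>
    hfr q ((hYm q).2 (hX3 _ q rfl (Or.inr hq)))
  have hb := blk_restrict f hf hσ hfirst hlast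
  refine ⟨Y.card, σ, ⟨f, hf, hσ⟩, ?_, ?_⟩
  · ext i
    rw [← hX2 i]
    unfold ell
    rw [← Finset.card_image_of_injective _ hf.injective]
    congr 1
    ext x
    simp only [Finset.mem_image, Finset.mem_filter, Finset.mem_univ, true_and]
    constructor
    · rintro ⟨a, ha, rfl⟩
      have h := (hYm _).1 (hfY a)
      rw [hb] at ha
      have : (⟨blk π (f a), hπ (f a)⟩ : Fin K) = i := Fin.ext ha
      rwa [this] at h
    · intro hx
      obtain ⟨a, ha⟩ := hfr x (Finset.mem_biUnion.2 ⟨i, Finset.mem_univ _, hx⟩)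
      refine ⟨a, ?_, ha⟩
      rw [hb, ha]
      exact hX1 i x hx
  · ext i j
    constructor
    · rintro ⟨x, y, hx, hy, hxy, h⟩
      rw [hb] at hx hy
      exact ⟨f x, f y, hx, hy, fun e => hf (hxy e), (hσ x y).1 h⟩
    · intro hR
      obtain ⟨x, y, hx, hy, hxy, h⟩ := id hR
      obtain ⟨q, hq, hq'⟩ := exists_first π x
      obtain ⟨r, hr, hr'⟩ := exists_last π y
      obtain ⟨a, ha⟩ := hfirst q (fun z hz => hq' z (by omega))
      obtain ⟨b, hb'⟩ := hlast r (fun z hz => hr' z (by omega))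
      have hlt : i = j → q < r := fun e =>
        lt_of_le_of_lt (hq' x rfl) (lt_of_lt_of_le (hxy e) (hr' y rfl))
      refine ⟨a, b, by rw [hb, ha]; omega, by rw [hb, hb']; omega, ?_, ?_⟩
      · intro e
        rw [← hf.lt_iff_lt, ha, hb']
        exact hlt e
      · rw [hσ, ha, hb']
        exact (brel_spec (by omega) (by omega) hlt).2 hR

/-- The type of a permutation. -/
noncomputable def typ (K : ℕ) {n : ℕ} (π : Equiv.Perm (Fin n)) :
    (Fin K → Fin 3) × (Fin K → Fin K → Prop) :=
  (fun i => ⟨min (ell K π i) 2, by omega⟩, brel K π)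

/-- Exponent vectors of the permutations of given type. -/
def expSet (C : ∀ n : ℕ, Set (Equiv.Perm (Fin n))) (K : ℕ)
    (T : (Fin K → Fin 3) × (Fin K → Fin K → Prop)) : Set (Fin K → ℕ) :=
  {v | ∃ n, ∃ π ∈ C n, typ K π = T ∧ ∀ i, ell K π i = T.1 i + v i}

lemma expSet_lower {C : ∀ n : ℕ, Set (Equiv.Perm (Fin n))} (hC : IsPermClass C) {K : ℕ}
    (hK : ∀ n, ∀ π ∈ C n, ∀ x, blk π x < K) (T : (Fin K → Fin 3) × (Fin K → Fin K → Prop)) :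
    IsLowerSet (expSet C K T) := by
  rintro v v' hv ⟨n, π, hπ, rfl, hl⟩
  have hm : ∀ i, (((typ K π).1 i : Fin 3) : ℕ) = min (ell K π i) 2 := fun i => rfl
  obtain ⟨m, σ, hσ, hσl, hσr⟩ := restrict_data (hK n π hπ)
    (fun i => ((typ K π).1 i : ℕ) + v' i)
    (fun i => by have := hl i; have : v' i ≤ v i := hv i; omega)
    (fun i => by have := hm i; omega)
  refine ⟨m, σ, hC _ _ _ _ hπ hσ, ?_, fun i => congrFun hσl i⟩
  refine Prod.ext ?_ hσr
  funext i
  apply Fin.ext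
  show min (ell K σ i) 2 = min (ell K π i) 2
  have h1 := congrFun hσl i
  have h2 := hm i
  have h3 := hl i
  have h4 : v' i ≤ v i := hv i
  have h1 : ell K σ i = ((typ K π).1 i : ℕ) + v' i := h1
  omega

lemma card_type {C : ∀ n : ℕ, Set (Equiv.Perm (Fin n))} {K : ℕ}
    (hK : ∀ n, ∀ π ∈ C n, ∀ x, blk π x < K) (T : (Fin K → Fin 3) × (Fin K → Fin K → Prop))
    (n : ℕ) : Nat.card {π : C n // typ K π.1 = T}
      = if n < ∑ i, (T.1 i : ℕ) then 0 else cnt (expSet C K T) (n - ∑ i, (T.1 i : ℕ)) := by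
  have hle : ∀ π : {π : C n // typ K π.1 = T}, ∀ i, (T.1 i : ℕ) ≤ ell K π.1.1 i := by
    rintro ⟨⟨π, hπ⟩, rfl⟩ i
    exact min_le_left _ _
  split_ifs with h
  · rw [Nat.card_eq_zero]
    left
    refine ⟨fun π => ?_⟩
    have h1 := ell_sum π.1.1 (hK n _ π.1.2)
    have h2 := Finset.sum_le_sum fun i (_ : i ∈ Finset.univ) => hle π i
    omega
  · unfold cnt
    refine Nat.card_congr (Equiv.ofBijective (fun π => ⟨fun i => ell K π.1.1 i - T.1 i, ?_, ?_⟩)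
      ⟨?_, ?_⟩)
    · exact ⟨n, π.1.1, π.1.2, π.2, fun i => by
        have := hle π i
        show ell K π.1.1 i = T.1 i + (ell K π.1.1 i - T.1 i)
        omega⟩
    · have h1 := ell_sum π.1.1 (hK n _ π.1.2)
      rw [Finset.sum_tsub_distrib _ (fun i _ => hle π i), h1]
    · intro π σ he
      apply Subtype.ext
      apply Subtype.ext
      refine perm_eq_of_data (hK n _ π.1.2) (hK n _ σ.1.2) ?_ ?_
      · funext i
        have := congrFun (congrArg Subtype.val he) i
        have h1 := hle π i
        have h2 := hle σ i
        simp only at this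
        omega
      · exact congrArg Prod.snd (π.2.trans σ.2.symm)
    · rintro ⟨v, ⟨m, π, hπ, hT, hl⟩, hv⟩
      have h1 := ell_sum π (hK m _ hπ)
      rw [Finset.sum_congr rfl fun i _ => hl i, Finset.sum_add_distrib] at h1
      have : m = n := by omega
      subst this
      refine ⟨⟨⟨π, hπ⟩, hT⟩, Subtype.ext ?_⟩
      funext i
      have := hl i
      simp only
      omega

lemma class_ratGen {C : ∀ n : ℕ, Set (Equiv.Perm (Fin n))} (hC : IsPermClass C) {K : ℕ}
    (hK : ∀ n, ∀ π ∈ C n, ∀ x, blk π x < K) : RatGen (fun n => Nat.card (C n)) := by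
  classical
  have h : (fun n => Nat.card (C n)) = fun n => ∑ T : (Fin K → Fin 3) × (Fin K → Fin K → Prop),
      (if n < ∑ i, (T.1 i : ℕ) then 0 else cnt (expSet C K T) (n - ∑ i, (T.1 i : ℕ))) := by
    funext n
    rw [← Nat.card_congr (Equiv.sigmaFiberEquiv fun π : C n => typ K π.1), Nat.card_sigma]
    exact Finset.sum_congr rfl fun T _ => card_type hK T n
  rw [h]
  exact RatGen.sum _ _ fun T _ => (lower_ratGen K _ (expSet_lower hC hK T)).shiftBy _


lemma perm_apply_inv {n : ℕ} (π : Equiv.Perm (Fin n)) (v : Fin n) : π (π⁻¹ v) = v := by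
  simp

lemma blk_inv_aux {n : ℕ} {π : Equiv.Perm (Fin n)} {x y : Fin n} (h : blk π x = blk π y) (k : ℕ) :
    ∀ v : Fin n, (v : ℕ) = π x + k → (v : ℕ) ≤ π y → blk π⁻¹ v = blk π⁻¹ (π x) := by
  have hin : ∀ v : Fin n, (π x : ℕ) ≤ v → (v : ℕ) ≤ π y → blk π (π⁻¹ v) = blk π x := by
    intro v h1 h2
    rcases Nat.eq_or_lt_of_le h1 with h1 | h1
    · rw [← Fin.ext h1]
      simp
    rcases Nat.eq_or_lt_of_le h2 with h2 | h2
    · rw [Fin.ext h2, h]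
      simp
    · refine blk_val_between h.symm ?_ ?_
      · show (π x : ℕ) < π (π⁻¹ v)
        simpa using h1
      · show (π (π⁻¹ v) : ℕ) < π y
        simpa using h2
  induction k with
  | zero =>
    intro v hv _
    rw [Fin.ext hv]
  | succ k ih =>
    intro v hv hvy
    have hlt : (π x : ℕ) + k < n := by have := v.2; omega
    let w : Fin n := ⟨π x + k, hlt⟩
    have hw : (w : ℕ) = π x + k := rfl
    have h1 := ih w hw (by omega)
    rw [← h1]
    refine blk_succ_notMem (by omega) ?_
    rw [mem_nonBonds]
    rintro ⟨v', hv', hb1, hb2⟩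
    have hvv : v' = v := Fin.ext (by omega)
    subst hvv
    obtain ⟨ε, hε, hs⟩ := blk_sign π x
    have h2 := hs (π⁻¹ v') (π⁻¹ w) (hin v' (by omega) hvy) (hin w (by omega) (by omega))
    simp only [perm_apply_inv] at h2
    rcases hε with rfl | rfl <;> omega

lemma blk_inv {n : ℕ} {π : Equiv.Perm (Fin n)} {x y : Fin n} (h : blk π x = blk π y) :
    blk π⁻¹ (π x) = blk π⁻¹ (π y) := by
  rcases le_total (π x : ℕ) (π y) with hle | hle
  · exact (blk_inv_aux h (π y - π x) (π y) (by omega) le_rfl).symm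
  · exact blk_inv_aux h.symm (π x - π y) (π x) (by omega) le_rfl

lemma blk_inv_iff {n : ℕ} {π : Equiv.Perm (Fin n)} {x y : Fin n} :
    blk π⁻¹ (π x) = blk π⁻¹ (π y) ↔ blk π x = blk π y := by
  refine ⟨fun h => ?_, blk_inv⟩
  have := blk_inv h
  simpa using this

/-- Cut points of a monotone labelling. -/
def cuts {n t : ℕ} (g : Fin n → Fin t) (j : Fin (t + 1)) : ℕ :=
  (Finset.univ.filter fun x => (g x : ℕ) < j).card

lemma cuts_mono {n t : ℕ} (g : Fin n → Fin t) : Monotone (cuts g) := by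
  intro i j hij
  refine Finset.card_le_card fun x hx => ?_
  simp only [Finset.mem_filter, Finset.mem_univ, true_and] at hx ⊢
  exact lt_of_lt_of_le hx hij

lemma cuts_zero {n t : ℕ} (g : Fin n → Fin t) : cuts g 0 = 0 := by
  simp [cuts]

lemma cuts_last {n t : ℕ} (g : Fin n → Fin t) : cuts g (Fin.last t) = n := by
  simp [cuts]

lemma cuts_iff {n t : ℕ} (g : Fin n → Fin t) (hg : Monotone g) (k : Fin t) (x : Fin n) :
    (cuts g k.castSucc ≤ (x : ℕ) ∧ (x : ℕ) < cuts g k.succ) ↔ g x = k := by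
  have key : ∀ j : Fin (t + 1), (g x : ℕ) < j ↔ (x : ℕ) < cuts g j := by
    intro j
    have := mem_lower_iff (Finset.univ.filter fun x => (g x : ℕ) < j)
      (fun a b hab hb => by
        simp only [Finset.mem_filter, Finset.mem_univ, true_and] at hb ⊢
        exact lt_of_le_of_lt (hg hab) hb) x
    simp only [Finset.mem_filter, Finset.mem_univ, true_and] at this
    exact this
  have h1 := key k.castSucc
  have h2 := key k.succ
  rw [← not_lt, ← h1, ← h2, Fin.ext_iff, Fin.val_castSucc, Fin.val_succ]
  omega

/-- Codes for labels. -/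
def code (K : ℕ) : Fin K × (Fin K × Fin 2) ≃ Fin (K * (K * 2)) :=
  ((Equiv.refl (Fin K)).prodCongr finProdFinEquiv).trans finProdFinEquiv

lemma code_le {K : ℕ} (p q : Fin K × (Fin K × Fin 2)) (h : p.1 < q.1 ∨ p = q) :
    code K p ≤ code K q := by
  rcases h with h | h
  · show ((code K p : Fin _) : ℕ) ≤ code K q
    simp only [code, Equiv.trans_apply, Equiv.prodCongr_apply,
      finProdFinEquiv_apply_val, Equiv.refl_apply, Prod.map]
    have h1 := p.2.1.2
    have h2 := p.2.2.2
    have h3 : (p.1 : ℕ) + 1 ≤ q.1 := h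
    have h4 := Nat.mul_le_mul_left (K * 2) h3
    rw [Nat.mul_add] at h4
    omega
  · rw [h]

/-- The universal matching matrix. -/
def gmat (K : ℕ) (k l : Fin (K * (K * 2))) : SignType :=
  if (code K).symm l = (((code K).symm k).2.1, ((code K).symm k).1, ((code K).symm k).2.2) then
    (if ((code K).symm k).2.2 = 0 then -1 else 1) else 0

lemma gmat_ne {K : ℕ} {k l : Fin (K * (K * 2))} (h : gmat K k l ≠ 0) :
    (code K).symm l = (((code K).symm k).2.1, ((code K).symm k).1, ((code K).symm k).2.2) := by
  by_contra hcon
  exact h (if_neg hcon)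

lemma gmat_matching (K : ℕ) : IsMatchingMat (gmat K) := by
  constructor
  · intro k l l' h h'
    apply (code K).symm.injective
    rw [gmat_ne h, gmat_ne h']
  · intro k k' l h h'
    apply (code K).symm.injective
    have := (gmat_ne h).symm.trans (gmat_ne h')
    simp only [Prod.mk.injEq] at this
    exact Prod.ext this.2.1 (Prod.ext this.1 this.2.2)

lemma gmat_grid {K n : ℕ} (π : Equiv.Perm (Fin n)) (h1 : ∀ x, blk π x < K)
    (h2 : ∀ v, blk π⁻¹ v < K) : InGrid (gmat K) π := by
  classical
  let s : Fin n → Fin 2 := fun x =>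
    if ∃ y z, blk π y = blk π x ∧ blk π z = blk π x ∧ y < z ∧ π y < π z then 1 else 0
  have hs : ∀ x y, blk π x = blk π y → s x = s y := by
    intro x y h
    simp only [s, h]
  have hs1 : ∀ x y, blk π x = blk π y → x < y → s x ≠ 0 → π x < π y := by
    intro x y hb hxy hsx
    have : ∃ y z, blk π y = blk π x ∧ blk π z = blk π x ∧ y < z ∧ π y < π z := by
      by_contra hcon
      exact hsx (if_neg hcon)
    obtain ⟨z, w, hz, hw, hzw, h⟩ := this
    exact (brel_spec (K := K) (i := ⟨blk π x, h1 x⟩) (j := ⟨blk π x, h1 x⟩) rfl hb.symm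
      (fun _ => hxy)).2 ⟨z, w, hz, hw, fun _ => hzw, h⟩
  have hs0 : ∀ x y, blk π x = blk π y → x < y → s x = 0 → π y < π x := by
    intro x y hb hxy hsx
    by_contra hcon
    have hne : π x ≠ π y := fun e => (ne_of_lt hxy) (π.injective e)
    have : ∃ y z, blk π y = blk π x ∧ blk π z = blk π x ∧ y < z ∧ π y < π z :=
      ⟨x, y, rfl, hb.symm, hxy, lt_of_le_of_ne (not_lt.1 hcon) hne⟩
    have h := (if_pos this).symm.trans hsx
    exact absurd h (by decide)
  let a : Fin n → Fin K := fun x => ⟨blk π x, h1 x⟩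
  let b : Fin n → Fin K := fun x => ⟨blk π⁻¹ (π x), h2 (π x)⟩
  have hab : ∀ x y, b x = b y ↔ a x = a y := by
    intro x y
    simp only [a, b, Fin.mk.injEq]
    exact blk_inv_iff
  have hsa : ∀ x y, a x = a y → s x = s y := fun x y h => hs x y (congrArg Fin.val h)
  let col : Fin n → Fin (K * (K * 2)) := fun x => code K (a x, b x, s x)
  let row : Fin n → Fin (K * (K * 2)) := fun x => code K (b x, a x, s x)
  have hcol : Monotone col := by
    intro x y hxy
    apply code_le
    have : a x ≤ a y := blk_mono π hxy
    rcases lt_or_eq_of_le this with h | h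
    · exact Or.inl h
    · right
      rw [h, (hab x y).2 h, hsa x y h]
  have hrow : Monotone (fun v => row (π⁻¹ v)) := by
    intro v w hvw
    apply code_le
    have : b (π⁻¹ v) ≤ b (π⁻¹ w) := by
      show blk π⁻¹ (π (π⁻¹ v)) ≤ blk π⁻¹ (π (π⁻¹ w))
      rw [perm_apply_inv, perm_apply_inv]
      exact blk_mono _ hvw
    rcases lt_or_eq_of_le this with h | h
    · exact Or.inl h
    · right
      have h' := (hab _ _).1 h
      rw [h, h', hsa _ _ h']
  have hM : ∀ i, gmat K (col i) (row i) = if s i = 0 then -1 else 1 := by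
    intro i
    simp [gmat, col, row]
  have hin : ∀ k l i, InBlock π (cuts col) (cuts fun v => row (π⁻¹ v)) k l i →
      col i = k ∧ row i = l := by
    rintro k l i ⟨e1, e2, e3, e4⟩
    refine ⟨(cuts_iff col hcol k i).1 ⟨e1, e2⟩, ?_⟩
    have := (cuts_iff _ hrow l (π i)).1 ⟨e3, e4⟩
    simpa using this
  have hcc : ∀ i j, col i = col j → blk π i = blk π j := by
    intro i j h
    have := (code K).injective h
    simp only [Prod.mk.injEq] at this
    exact congrArg Fin.val this.1
  refine ⟨cuts col, cuts fun v => row (π⁻¹ v), cuts_mono _, cuts_mono _, cuts_zero _, cuts_last _,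
    cuts_zero _, cuts_last _, fun k l => ⟨?_, ?_, ?_⟩⟩
  · intro hkl i j hi hj hij
    obtain ⟨rfl, rfl⟩ := hin k l i hi
    refine hs1 i j (hcc i j (hin _ _ j hj).1.symm) hij fun h0 => ?_
    rw [hM, if_pos h0] at hkl
    exact absurd hkl (by decide)
  · intro hkl i j hi hj hij
    obtain ⟨rfl, rfl⟩ := hin k l i hi
    refine hs0 i j (hcc i j (hin _ _ j hj).1.symm) hij ?_
    by_contra h0
    rw [hM, if_neg h0] at hkl
    exact absurd hkl (by decide)
  · intro hkl i hi
    obtain ⟨rfl, rfl⟩ := hin k l i hi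
    rw [hM] at hkl
    split_ifs at hkl

/-- **The Fibonacci dichotomy (Kaiser–Klazar).** For every permutation class `C`, exactly
one of the following occurs: either `|C_n| ≥ F_n` for all `n` (`F_1 = F_2 = 1`), or `C`
lies in the grid class of a matching and `|C_n|` agrees with a polynomial for all
sufficiently large `n`. -/
theorem fibonacci_dichotomy (C : ∀ n : ℕ, Set (Equiv.Perm (Fin n))) (hC : IsPermClass C) :
    Xor' (∀ n : ℕ, Nat.fib n ≤ Nat.card (C n))
      (∃ (t u : ℕ) (M : Fin t → Fin u → SignType), IsMatchingMat M ∧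
        (∀ n : ℕ, ∀ π ∈ C n, InGrid M π) ∧
        ∃ (p : Polynomial ℚ) (N : ℕ), ∀ n : ℕ, N ≤ n →
          (Nat.card (C n) : ℚ) = p.eval (n : ℚ)) := by
  by_cases hall : ∀ n : ℕ, Nat.fib n ≤ Nat.card (C n)
  · refine Or.inl ⟨hall, ?_⟩
    rintro ⟨t, u, M, -, -, p, N, hp⟩
    refine poly_not_fib p N fun n hn => ?_
    rw [← hp n hn]
    exact_mod_cast hall n
  · refine Or.inr ⟨?_, hall⟩
    push Not at hall
    obtain ⟨n0, hn0⟩ := hall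
    obtain ⟨m, rfl⟩ : ∃ m, n0 = m + 1 := by
      cases n0 with
      | zero => simp at hn0
      | succ m => exact ⟨m, rfl⟩
    let K := 2 * ((m + 1) * ((m + 1) * ((m + 2) * (m + 1))))
    have hK : ∀ n, ∀ π ∈ C n, ∀ x, blk π x < K := fun n π hπ x =>
      lt_of_le_of_lt (blk_le π x) (nonBonds_card_lt hC hn0 hπ)
    have hK' : ∀ n, ∀ π ∈ C n, ∀ x, blk π⁻¹ x < K := fun n π hπ x =>
      lt_of_le_of_lt (blk_le π⁻¹ x) (nonBonds_card_lt (invClass_isPermClass hC)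
        (by rw [invClass_card]; exact hn0) (by
          show (π⁻¹)⁻¹ ∈ C n
          rwa [inv_inv]))
    exact ⟨_, _, gmat K, gmat_matching K, fun n π hπ => gmat_grid π (hK n π hπ) (hK' n π hπ),
      (class_ratGen hC hK).eventually⟩
end

section
/- Every permutation class C for which there exists a polynomial p with |C_n| = p(n) for all sufficiently large n is finitely based; that is, there is a finite set B of permutations with C = Av(B). -/
namespace PolyClass

/-! ### Basic facts on containment -/

lemma PermContains.refl {n : ℕ} (π : Equiv.Perm (Fin n)) : PermContains π π :=
  ⟨id, strictMono_id, fun _ _ => Iff.rfl⟩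

lemma PermContains.trans {a b c : ℕ} {σ : Equiv.Perm (Fin a)} {τ : Equiv.Perm (Fin b)}
    {π : Equiv.Perm (Fin c)} (h1 : PermContains σ τ) (h2 : PermContains τ π) :
    PermContains σ π := by
  obtain ⟨f, hf, hf'⟩ := h1
  obtain ⟨g, hg, hg'⟩ := h2
  exact ⟨g ∘ f, hg.comp hf, fun i j => (hf' i j).trans (hg' _ _)⟩

lemma PermContains.le {a b : ℕ} {σ : Equiv.Perm (Fin a)} {τ : Equiv.Perm (Fin b)}
    (h1 : PermContains σ τ) : a ≤ b := by
  obtain ⟨f, hf, hf'⟩ := h1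
  simpa using Fintype.card_le_of_injective f hf.injective

lemma PermContains.inv {a b : ℕ} {σ : Equiv.Perm (Fin a)} {τ : Equiv.Perm (Fin b)}
    (h1 : PermContains σ τ) : PermContains σ⁻¹ τ⁻¹ := by
  obtain ⟨f, hf, hf'⟩ := h1
  refine ⟨fun i => τ (f (σ⁻¹ i)), ?_, ?_⟩
  · intro i j hij
    rw [← hf']
    simpa using hij
  · intro i j
    simp [hf.lt_iff_lt]

lemma strictMono_fin_eq_id {n : ℕ} (f : Fin n → Fin n) (hf : StrictMono f) : f = id := by
  apply (StrictMono.range_inj hf strictMono_id).1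
  rw [Set.range_id, (Finite.surjective_of_injective hf.injective).range_eq]

lemma PermContains.eq {n : ℕ} {σ τ : Equiv.Perm (Fin n)} (h : PermContains σ τ) : σ = τ := by
  obtain ⟨f, hf, hf'⟩ := h
  have hid := strictMono_fin_eq_id f hf
  subst hid
  have h2 : StrictMono (fun i => τ (σ⁻¹ i)) := by
    intro i j hij
    have := (hf' (σ⁻¹ i) (σ⁻¹ j)).1 (by simpa using hij)
    simpa using this
  have h3 := strictMono_fin_eq_id _ h2
  ext i
  have := congrFun h3 (σ i)
  simp at this
  rw [this]

/-- The pattern of a permutation along a subsequence. -/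
lemma exists_pattern {k n : ℕ} (π : Equiv.Perm (Fin n)) (f : Fin k → Fin n) (hf : StrictMono f) :
    ∃ σ : Equiv.Perm (Fin k), ∀ i j : Fin k, σ i < σ j ↔ π (f i) < π (f j) := by
  have hinj : Function.Injective (fun i => π (f i)) := π.injective.comp hf.injective
  have hs : StrictMono ((fun i => π (f i)) ∘ Tuple.sort (fun i => π (f i))) :=
    (Tuple.monotone_sort _).strictMono_of_injective
      (hinj.comp (Tuple.sort (fun i => π (f i))).injective)
  refine ⟨(Tuple.sort (fun i => π (f i)))⁻¹, fun i j => ?_⟩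
  rw [← hs.lt_iff_lt]
  simp

/-! ### Chunks -/

/-- `p` has both an ascent pair and a descent pair in `[s, e)`. -/
def NonMono (p : ℕ → ℕ) (s e : ℕ) : Prop :=
  (∃ i j, s ≤ i ∧ i < j ∧ j < e ∧ p i < p j) ∧ (∃ i j, s ≤ i ∧ i < j ∧ j < e ∧ p j < p i)

/-- there are `k` disjoint consecutive non-monotone chunks in `[s, n)`. -/
def HasChunks (p : ℕ → ℕ) (n s k : ℕ) : Prop :=
  ∃ e : ℕ → ℕ, s ≤ e 0 ∧ e k ≤ n ∧ ∀ j < k, NonMono p (e j) (e (j + 1))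

/-- `E` is a set of break points such that `p` is monotone on unbroken intervals in `[s, n)`. -/
def GoodBreaks (p : ℕ → ℕ) (n s : ℕ) (E : Finset ℕ) : Prop :=
  ∀ i j, s ≤ i → j < n → (∀ e ∈ E, ¬ (i < e ∧ e ≤ j)) →
    (∀ x y, i ≤ x → x < y → y ≤ j → p x < p y) ∨ (∀ x y, i ≤ x → x < y → y ≤ j → p y < p x)

lemma mono_of_not_nonMono (p : ℕ → ℕ) (hp : Function.Injective p) {s e : ℕ}
    (h : ¬ NonMono p s e) {i j : ℕ} (hi : s ≤ i) (hj : j < e) :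
    (∀ x y, i ≤ x → x < y → y ≤ j → p x < p y) ∨ (∀ x y, i ≤ x → x < y → y ≤ j → p y < p x) := by
  by_contra! hcon
  obtain ⟨⟨x, y, h1, h2, h3, h4⟩, ⟨x', y', h1', h2', h3', h4'⟩⟩ := hcon
  have := hp.ne h2.ne
  have := hp.ne h2'.ne
  exact h ⟨⟨x', y', by omega, by omega, by omega, by omega⟩,
    ⟨x, y, by omega, by omega, by omega, by omega⟩⟩

lemma chunks_or_breaks (p : ℕ → ℕ) (hp : Function.Injective p) (n k : ℕ) :
    ∀ s ≤ n, HasChunks p n s k ∨ ∃ E : Finset ℕ, E.card ≤ 2 * k ∧ GoodBreaks p n s E := by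
  induction k with
  | zero => exact fun s hs => Or.inl ⟨fun _ => s, le_rfl, hs, by simp⟩
  | succ k ih =>
    intro s hs
    by_cases h : NonMono p s n
    · classical
      have hex : ∃ e, NonMono p s e := ⟨n, h⟩
      obtain ⟨e, he, hmin⟩ : ∃ e, NonMono p s e ∧ ∀ m < e, ¬ NonMono p s m :=
        ⟨Nat.find hex, Nat.find_spec hex, fun m hm => Nat.find_min hex hm⟩
      have hen : e ≤ n := by
        by_contra! hlt
        exact hmin n hlt h
      have hse : s < e := by
        obtain ⟨⟨i, j, h1, h2, h3, h4⟩, -⟩ := he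
        omega
      rcases ih e hen with ⟨g, hg0, hgk, hg⟩ | ⟨E, hE, hgood⟩
      · left
        refine ⟨fun j => if j = 0 then s else g (j - 1), by simp, by simpa using hgk, ?_⟩
        intro j hj
        rcases Nat.eq_zero_or_pos j with rfl | hj0
        · obtain ⟨⟨i, j, h1, h2, h3, h4⟩, ⟨i', j', h1', h2', h3', h4'⟩⟩ := he
          simp only [if_true, Nat.zero_add, Nat.one_ne_zero, if_false, Nat.sub_self]
          exact ⟨⟨i, j, h1, h2, by omega, h4⟩, ⟨i', j', h1', h2', by omega, h4'⟩⟩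
        · have := hg (j - 1) (by omega)
          have h3 : j - 1 + 1 = j := by omega
          rw [h3] at this
          simpa [hj0.ne'] using this
      · right
        refine ⟨insert (e - 1) (insert e E), ?_, ?_⟩
        · have h1 := Finset.card_insert_le (e - 1) (insert e E)
          have h2 := Finset.card_insert_le e E
          omega
        · intro i j hi hj hbr
          have hb1 := hbr (e - 1) (by simp)
          have hb2 := hbr e (by simp)
          by_cases hje : j < e - 1
          · exact mono_of_not_nonMono p hp (hmin (e - 1) (by omega)) hi hje
          · by_cases hie : e ≤ i
            · exact hgood i j hie hj (fun x hx => hbr x (by simp [hx]))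
            · left
              intro x y hx hxy hy
              omega
    · right
      exact ⟨∅, by simp, fun i j hi hj _ => mono_of_not_nonMono p hp h hi hj⟩

/-! ### Chunks give exponentially many patterns -/

lemma exp_patterns {n k : ℕ} (π : Equiv.Perm (Fin n)) (p : ℕ → ℕ)
    (hp : ∀ i : Fin n, p i = π i) (h : HasChunks p n 0 k) :
    ∃ F : (Fin k → Bool) → Equiv.Perm (Fin (2 * k)), Function.Injective F ∧
      ∀ b, PermContains (F b) π := by
  obtain ⟨e, -, hek, he⟩ := h
  have hA : ∀ j : Fin k, ∀ b : Bool, ∃ x : ℕ × ℕ, e j ≤ x.1 ∧ x.1 < x.2 ∧ x.2 < e (j + 1) ∧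
      (p x.1 < p x.2 ↔ b = true) := by
    intro j b
    obtain ⟨⟨i, j, h1, h2, h3, h4⟩, ⟨i', j', h1', h2', h3', h4'⟩⟩ := he j j.2
    cases b
    · exact ⟨(i', j'), h1', h2', h3', by simp; omega⟩
    · exact ⟨(i, j), h1, h2, h3, by simp; omega⟩
  choose A hA1 hA2 hA3 hA4 using hA
  have hmono : ∀ i j, i ≤ j → j ≤ k → e i ≤ e j := by
    intro i j hij
    induction j, hij using Nat.le_induction with
    | base => simp
    | succ j hij ih =>
      intro hj
      obtain ⟨⟨x, y, h1, h2, h3, h4⟩, -⟩ := he j (by omega)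
      have := ih (by omega)
      omega
  have hdiv : ∀ i : Fin (2 * k), (i : ℕ) / 2 < k := fun i => by omega
  have key : ∀ b : Fin k → Bool, ∃ σ : Equiv.Perm (Fin (2 * k)), PermContains σ π ∧
      ∀ j : Fin k, (σ ⟨2 * j, by omega⟩ < σ ⟨2 * j + 1, by omega⟩ ↔ b j = true) := by
    intro b
    let f : Fin (2 * k) → ℕ := fun i =>
      if (i : ℕ) % 2 = 0 then (A ⟨i / 2, hdiv i⟩ (b ⟨i / 2, hdiv i⟩)).1
      else (A ⟨i / 2, hdiv i⟩ (b ⟨i / 2, hdiv i⟩)).2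
    have hlo : ∀ i : Fin (2 * k), e (i / 2) ≤ f i := by
      intro i
      have h1 := hA1 ⟨i / 2, hdiv i⟩ (b ⟨i / 2, hdiv i⟩)
      have h2 := hA2 ⟨i / 2, hdiv i⟩ (b ⟨i / 2, hdiv i⟩)
      simp only [f]
      split_ifs
      · exact h1
      · exact h1.trans h2.le
    have hhi : ∀ i : Fin (2 * k), f i < e (i / 2 + 1) := by
      intro i
      have h1 := hA3 ⟨i / 2, hdiv i⟩ (b ⟨i / 2, hdiv i⟩)
      have h2 := hA2 ⟨i / 2, hdiv i⟩ (b ⟨i / 2, hdiv i⟩)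
      simp only [f]
      split_ifs
      · exact h2.trans h1
      · exact h1
    have hfn : ∀ i, f i < n := fun i =>
      (hhi i).trans_le ((hmono _ _ (by have := hdiv i; omega) le_rfl).trans hek)
    have hfm : StrictMono f := by
      intro i j hij
      have hij' : (i : ℕ) < j := hij
      by_cases hd : (i : ℕ) / 2 = j / 2
      · have hi : (i : ℕ) % 2 = 0 := by omega
        have hj : ¬ (j : ℕ) % 2 = 0 := by omega
        simp only [f, hi, hj, if_true, if_false, hd]
        exact hA2 _ _
      · have := hmono (i / 2 + 1) (j / 2) (by omega) (by have := hdiv j; omega)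
        exact (hhi i).trans_le (this.trans (hlo j))
    obtain ⟨σ, hσ⟩ := exists_pattern π (fun i => (⟨f i, hfn i⟩ : Fin n))
      (fun i j hij => hfm hij)
    refine ⟨σ, ⟨_, fun i j hij => hfm hij, hσ⟩, fun j => ?_⟩
    rw [hσ, Fin.lt_def, ← hp, ← hp, ← hA4 j (b j)]
    have e1 : (2 * (j : ℕ)) % 2 = 0 := by omega
    have e2 : ¬ (2 * (j : ℕ) + 1) % 2 = 0 := by omega
    have e3 : (2 * (j : ℕ)) / 2 = j := by omega
    have e4 : (2 * (j : ℕ) + 1) / 2 = j := by omega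
    simp only [f, e1, e2, e3, e4, if_true, if_false]
  choose F hF1 hF2 using key
  refine ⟨F, ?_, hF1⟩
  intro b b' hbb
  funext j
  have h1 := hF2 b j
  have h2 := hF2 b' j
  rw [hbb] at h1
  rw [Bool.eq_iff_iff]
  exact h1.symm.trans h2

/-! ### Polynomials versus exponentials -/

lemma exists_poly_lt (p : Polynomial ℚ) (N : ℕ) :
    ∃ k : ℕ, N ≤ 2 * k ∧ p.eval ((2 * k : ℕ) : ℚ) < 2 ^ k := by
  let q : Polynomial ℝ := (p.map (algebraMap ℚ ℝ)).comp (Polynomial.C 4 * Polynomial.X)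
  have h1 := Polynomial.tendsto_div_exp_atTop q
  have h2 : Filter.Tendsto (fun k : ℕ => (k : ℝ) / 2) Filter.atTop Filter.atTop :=
    tendsto_natCast_atTop_atTop.atTop_div_const (by norm_num)
  have h3 := ((h1.comp h2).eventually (gt_mem_nhds (zero_lt_one))).and
    (Filter.eventually_ge_atTop N)
  obtain ⟨k, hk, hkN⟩ := h3.exists
  refine ⟨k, by omega, ?_⟩
  simp only [Function.comp] at hk
  rw [div_lt_one (Real.exp_pos _)] at hk
  have h4 : Real.exp ((k : ℝ) / 2) ≤ 2 ^ k := by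
    have : (k : ℝ) / 2 = k * (1 / 2) := by ring
    rw [this, Real.exp_nat_mul]
    apply pow_le_pow_left₀ (Real.exp_pos _).le
    have h5 : Real.exp (1 / 2) ^ 2 < 2 ^ 2 := by
      rw [← Real.exp_nat_mul]
      have := Real.exp_one_lt_d9
      norm_num
      linarith
    exact (lt_of_pow_lt_pow_left₀ 2 (by norm_num) h5).le
  have h6 : q.eval ((k : ℝ) / 2) = ((p.eval ((2 * k : ℕ) : ℚ) : ℚ) : ℝ) := by
    have h7 : (4 : ℝ) * ((k : ℝ) / 2) = algebraMap ℚ ℝ ((2 * k : ℕ) : ℚ) := by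
      push_cast
      simp
      ring
    simp only [q, Polynomial.eval_comp, Polynomial.eval_mul, Polynomial.eval_C, Polynomial.eval_X]
    rw [h7, Polynomial.eval_map_algebraMap, Polynomial.aeval_algebraMap_apply]
    simp
  rw [h6] at hk
  have := hk.trans_le h4
  exact_mod_cast this

/-! ### Bounding the number of non-bonded adjacencies -/

/-- `i, i+1` is separated in value by some other entry. -/
def Unbonded (p : ℕ → ℕ) (n i : ℕ) : Prop :=
  i + 1 < n ∧ ∃ x, x ≠ i ∧ x ≠ i + 1 ∧ x < n ∧ ¬ (p i < p x ↔ p (i + 1) < p x)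

lemma unbonded_card (P : Equiv.Perm ℕ) (n : ℕ) (hP : ∀ i, i < n → P i < n) (E E' : Finset ℕ)
    (hE : GoodBreaks P n 0 E) (hE' : GoodBreaks (P⁻¹ : Equiv.Perm ℕ) n 0 E')
    (Q : Finset ℕ) (hQ : ∀ i ∈ Q, Unbonded P n i) :
    Q.card ≤ E.card + E'.card * (E.card + 1) := by
  classical
  have hcross : ∀ i, ∃ e, i ∈ Q →
      e ∈ E' ∧ ((P i < e ∧ e ≤ P (i + 1)) ∨ (P (i + 1) < e ∧ e ≤ P i)) := by
    intro i
    by_cases hi : i ∈ Q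
    swap
    · exact ⟨0, fun h => absurd h hi⟩
    obtain ⟨hin, x, hx1, hx2, hxn, hx⟩ := hQ i hi
    by_contra! hcon
    have hcon' : ∀ e ∈ E', ¬ (P i < e ∧ e ≤ P (i + 1)) ∧ ¬ (P (i + 1) < e ∧ e ≤ P i) := by
      intro e he
      obtain ⟨-, h⟩ := hcon e
      have := h he
      omega
    have hn1 := hP i (by omega)
    have hn2 := hP (i + 1) hin
    have hne1 : P x ≠ P i := P.injective.ne hx1
    have hne2 : P x ≠ P (i + 1) := P.injective.ne hx2
    have s1 : P⁻¹ (P i) = i := by simp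
    have s2 : P⁻¹ (P (i + 1)) = i + 1 := by simp
    have s3 : P⁻¹ (P x) = x := by simp
    rcases lt_or_ge (P i) (P (i + 1)) with hlt | hge
    · have hb : P i < P x ∧ P x < P (i + 1) := by omega
      rcases hE' (P i) (P (i + 1)) (by omega) hn2 (fun e he => (hcon' e he).1) with h | h
      · have a1 := h (P i) (P x) le_rfl hb.1 hb.2.le
        have a2 := h (P x) (P (i + 1)) hb.1.le hb.2 le_rfl
        omega
      · have a1 := h (P i) (P x) le_rfl hb.1 hb.2.le
        have a2 := h (P x) (P (i + 1)) hb.1.le hb.2 le_rfl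
        omega
    · have hb : P (i + 1) < P x ∧ P x < P i := by omega
      rcases hE' (P (i + 1)) (P i) (by omega) hn1 (fun e he => (hcon' e he).2) with h | h
      · have a1 := h (P (i + 1)) (P x) le_rfl hb.1 hb.2.le
        have a2 := h (P x) (P i) hb.1.le hb.2 le_rfl
        omega
      · have a1 := h (P (i + 1)) (P x) le_rfl hb.1 hb.2.le
        have a2 := h (P x) (P i) hb.1.le hb.2 le_rfl
        omega
  choose ε hε using hcross
  have h1 : (Q.filter (fun i => i + 1 ∈ E)).card ≤ E.card := by
    apply Finset.card_le_card_of_injOn (fun i => i + 1)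
    · intro i hi
      simp at hi
      exact hi.2
    · intro i _ j _ hij
      simpa using hij
  have aux : ∀ i j, i ∈ Q → j ∈ Q → j + 1 ∉ E → ε i = ε j →
      (E.filter (· ≤ i)).card = (E.filter (· ≤ j)).card → i < j → False := by
    intro i j hi hj hjE he hc hij
    have hsub : E.filter (· ≤ i) ⊆ E.filter (· ≤ j) := by
      intro e he
      simp only [Finset.mem_filter] at he ⊢
      exact ⟨he.1, by omega⟩
    have heq := Finset.eq_of_subset_of_card_le hsub hc.ge
    have hbr : ∀ e ∈ E, ¬ (i < e ∧ e ≤ j + 1) := by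
      rintro e heE ⟨h1, h2⟩
      rcases Nat.lt_or_ge j e with h3 | h3
      · have : e = j + 1 := by omega
        exact hjE (this ▸ heE)
      · have : e ∈ E.filter (· ≤ i) := by
          rw [heq]
          simp [heE, h3]
        simp at this
        omega
    have ci := (hε i hi).2
    have cj := (hε j hj).2
    rw [← he] at cj
    have hjn := (hQ j hj).1
    have hcase : i + 1 = j ∨ i + 1 < j := by omega
    rcases hE i (j + 1) (by omega) hjn hbr with h | h
    · have a1 := h i (i + 1) le_rfl (by omega) (by omega)
      have a2 := h j (j + 1) (by omega) (by omega) le_rfl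
      rcases hcase with rfl | hlt
      · omega
      · have a3 := h (i + 1) j (by omega) hlt (by omega)
        omega
    · have a1 := h i (i + 1) le_rfl (by omega) (by omega)
      have a2 := h j (j + 1) (by omega) (by omega) le_rfl
      rcases hcase with rfl | hlt
      · omega
      · have a3 := h (i + 1) j (by omega) hlt (by omega)
        omega
  have h2 : (Q.filter (fun i => ¬ i + 1 ∈ E)).card ≤ (E' ×ˢ Finset.range (E.card + 1)).card := by
    apply Finset.card_le_card_of_injOn (fun i => (ε i, (E.filter (· ≤ i)).card))
    · intro i hi
      simp only [Finset.coe_filter, Set.mem_ofPred_eq] at hi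
      simp only [Finset.coe_product, Set.mem_prod, Finset.mem_coe, Finset.mem_range]
      exact ⟨(hε i hi.1).1, Nat.lt_succ_of_le (Finset.card_filter_le _ _)⟩
    · intro i hi j hj hij
      simp only [Finset.coe_filter, Set.mem_ofPred_eq] at hi hj
      simp only [Prod.mk.injEq] at hij
      rcases lt_trichotomy i j with h | h | h
      · exact (aux i j hi.1 hj.1 hj.2 hij.1 hij.2 h).elim
      · exact h
      · exact (aux j i hj.1 hi.1 hi.2 hij.1.symm hij.2.symm h).elim
  rw [Finset.card_product, Finset.card_range] at h2
  have h3 := Finset.card_filter_add_card_filter_not (s := Q) (fun i => i + 1 ∈ E)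
  omega

/-! ### Block representations -/

/-- `π` splits into at most `M+1` blocks with order relations depending only on the blocks,
recorded by `T`. -/
def Rep (M : ℕ) {n : ℕ} (π : Equiv.Perm (Fin n)) (c : Fin n → Fin (M + 1))
    (T : Fin (M + 1) → Fin (M + 1) → Prop) : Prop :=
  Monotone c ∧ ∀ i j, i < j → (π i < π j ↔ T (c i) (c j))

lemma walk (p : ℕ → ℕ) (n i i' x : ℕ) (hii : i ≤ i') (hn : i' < n) (hxn : x < n)
    (hb : ∀ j, i ≤ j → j < i' → ¬ Unbonded p n j) (hx : x < i ∨ i' < x) :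
    p i < p x ↔ p i' < p x := by
  induction i', hii using Nat.le_induction with
  | base => rfl
  | succ j hij ih =>
    rw [ih (by omega) (fun l h1 h2 => hb l h1 (by omega)) (by omega)]
    by_contra hcon
    exact hb j hij (by omega) ⟨hn, x, by omega, by omega, hxn, hcon⟩

lemma exists_rep (M : ℕ) {n : ℕ} (π : Equiv.Perm (Fin n)) (p : ℕ → ℕ)
    (hp : ∀ i : Fin n, p i = π i) (hinj : Function.Injective p)
    (hM : ∀ Q : Finset ℕ, (∀ i ∈ Q, Unbonded p n i) → Q.card ≤ M) :
    ∃ c T, Rep M π c T := by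
  classical
  let S : ℕ → Finset ℕ := fun i => (Finset.range i).filter (fun j => Unbonded p n j)
  have hSM : ∀ i, (S i).card ≤ M := fun i => hM _ (fun j hj => (Finset.mem_filter.1 hj).2)
  have hS : ∀ i j, i ≤ j → S i ⊆ S j := by
    intro i j hij x hx
    simp only [S, Finset.mem_filter, Finset.mem_range] at hx ⊢
    exact ⟨by omega, hx.2⟩
  let c : Fin n → Fin (M + 1) := fun i => ⟨(S i).card, Nat.lt_succ_of_le (hSM i)⟩
  have hbond : ∀ i j : Fin n, c i = c j → ∀ l, (i : ℕ) ≤ l → l < j → ¬ Unbonded p n l := by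
    intro i j hc l h1 h2 hu
    have hc' : (S i).card = (S j).card := by simpa [c] using hc
    have := Finset.eq_of_subset_of_card_le (hS i j (by omega)) hc'.ge
    have hl : l ∈ S j := by simp [S, h2, hu]
    rw [← this] at hl
    simp [S] at hl
    omega
  have hmove : ∀ i i' x : Fin n, c i = c i' → (x < i ∧ x < i' ∨ i < x ∧ i' < x) →
      (p i < p x ↔ p i' < p x) := by
    intro i i' x hc hx
    simp only [Fin.lt_def] at hx
    rcases le_total (i : ℕ) i' with h | h
    · exact walk p n i i' x h i'.2 x.2 (hbond i i' hc) (by omega)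
    · exact (walk p n i' i x h i.2 x.2 (hbond i' i hc.symm) (by omega)).symm
  have hmove' : ∀ i i' x : Fin n, c i = c i' → (x < i ∧ x < i' ∨ i < x ∧ i' < x) →
      (p x < p i ↔ p x < p i') := by
    intro i i' x hc hx
    have h1 := hmove i i' x hc hx
    simp only [Fin.lt_def] at hx
    have n1 : p i ≠ p x := hinj.ne (by omega)
    have n2 : p i' ≠ p x := hinj.ne (by omega)
    omega
  refine ⟨c, fun s t => ∃ i j : Fin n, i < j ∧ c i = s ∧ c j = t ∧ π i < π j, ?_, ?_⟩
  · intro i j hij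
    exact Finset.card_le_card (hS i j hij)
  · intro i j hij
    constructor
    · exact fun h => ⟨i, j, hij, rfl, rfl, h⟩
    · rintro ⟨i', j', hij', hci, hcj, h⟩
      rw [Fin.lt_def, ← hp, ← hp] at h ⊢
      have hJ : ∃ J, c J = c j ∧ j ≤ J ∧ j' ≤ J := by
        rcases le_total j j' with h | h
        · exact ⟨j', hcj, h, le_rfl⟩
        · exact ⟨j, rfl, le_rfl, h⟩
      obtain ⟨J, hcJ, hJ1, hJ2⟩ := hJ
      rw [hmove' j J i hcJ.symm (Or.inl ⟨hij, hij.trans_le hJ1⟩),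
        hmove i i' J hci.symm (Or.inr ⟨hij.trans_le hJ1, hij'.trans_le hJ2⟩),
        hmove' J j' i' (hcJ.trans hcj.symm) (Or.inl ⟨hij'.trans_le hJ2, hij'⟩)]
      exact h

lemma exists_fiber_map {α β : Type*} [LinearOrder α] [LinearOrder β] (A : Finset α)
    (B : Finset β) (h : A.card ≤ B.card) :
    ∃ g : A → β, StrictMono g ∧ ∀ a, g a ∈ B := by
  refine ⟨fun a => B.orderEmbOfFin rfl (Fin.castLE h ((A.orderIsoOfFin rfl).symm a)), ?_, ?_⟩
  · intro a b hab
    simpa using hab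
  · intro a
    exact Finset.orderEmbOfFin_mem _ _ _

lemma contains_of_rep {M n m : ℕ} {π : Equiv.Perm (Fin n)} {τ : Equiv.Perm (Fin m)}
    {c : Fin n → Fin (M + 1)} {d : Fin m → Fin (M + 1)} {T : Fin (M + 1) → Fin (M + 1) → Prop}
    (h1 : Rep M π c T) (h2 : Rep M τ d T)
    (h : ∀ t, (Finset.univ.filter (fun i => c i = t)).card ≤
      (Finset.univ.filter (fun i => d i = t)).card) : PermContains π τ := by
  choose g hg hgm using fun t => exists_fiber_map _ _ (h t)
  let f : Fin n → Fin m := fun i => g (c i) ⟨i, by simp⟩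
  have hdf : ∀ i, d (f i) = c i := by
    intro i
    have := hgm (c i) ⟨i, by simp⟩
    simpa using this
  have hf : StrictMono f := by
    intro i j hij
    rcases (h1.1 hij.le).lt_or_eq with hc | hc
    · by_contra! hle
      have := h2.1 hle
      rw [hdf, hdf] at this
      exact absurd hc (not_lt.2 this)
    · have : ∀ t (hi : c i = t) (hj : c j = t), g t ⟨i, by simp [hi]⟩ < g t ⟨j, by simp [hj]⟩ :=
        fun t hi hj => hg t hij
      have h3 := this (c j) hc rfl
      have : ∀ t (hi : c i = t), g t ⟨i, by simp [hi]⟩ = f i := by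
        rintro t rfl
        rfl
      rw [this _ hc] at h3
      exact h3
  have key : ∀ i j, i < j → (π i < π j ↔ τ (f i) < τ (f j)) := by
    intro i j hij
    rw [h1.2 i j hij, h2.2 _ _ (hf hij), hdf, hdf]
  refine ⟨f, hf, fun i j => ?_⟩
  rcases lt_trichotomy i j with hij | rfl | hij
  · exact key i j hij
  · simp
  · have h3 := key j i hij
    have n1 : π i ≠ π j := π.injective.ne hij.ne'
    have n2 : τ (f i) ≠ τ (f j) := τ.injective.ne (hf.injective.ne hij.ne')
    rw [← not_iff_not, not_lt, not_lt, le_iff_lt_or_eq, le_iff_lt_or_eq]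
    simp only [n1.symm, n2.symm, or_false]
    exact h3

lemma finite_of_rep (M : ℕ) (B : Set ((n : ℕ) × Equiv.Perm (Fin n)))
    (hrep : ∀ β ∈ B, ∃ c T, Rep M β.2 c T)
    (hanti : ∀ β ∈ B, ∀ γ ∈ B, PermContains β.2 γ.2 → β = γ) : B.Finite := by
  by_contra hinf
  have hinf' : Infinite B := Set.infinite_coe_iff.2 hinf
  choose c T hcT using fun β : B => hrep β.1 β.2
  obtain ⟨T0, hT0⟩ := Finite.exists_infinite_fiber T
  let s := Infinite.natEmbedding (T ⁻¹' {T0})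
  obtain ⟨i, j, hij, hle⟩ := wellQuasiOrdered_le (α := Fin (M + 1) → ℕ)
    (fun i t => (Finset.univ.filter (fun x => c (s i).1 x = t)).card)
  have e1 : T (s i).1 = T0 := (s i).2
  have e2 : T (s j).1 = T0 := (s j).2
  have r1 := hcT (s i).1
  have r2 := hcT (s j).1
  rw [e1] at r1
  rw [e2] at r2
  have := hanti _ (s i).1.2 _ (s j).1.2 (contains_of_rep r1 r2 hle)
  have h3 : s i = s j := Subtype.ext (Subtype.ext this)
  exact hij.ne (s.injective h3)

/-! ### Basis elements -/

/-- extension of a permutation of `Fin n` to `ℕ` by the identity. -/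
noncomputable def extend {n : ℕ} (π : Equiv.Perm (Fin n)) : Equiv.Perm ℕ :=
  π.extendDomain Fin.equivSubtype

lemma extend_apply {n : ℕ} (π : Equiv.Perm (Fin n)) (i : Fin n) : extend π i = π i :=
  Equiv.Perm.extendDomain_apply_image π Fin.equivSubtype i

lemma extend_inv {n : ℕ} (π : Equiv.Perm (Fin n)) : (extend π)⁻¹ = extend π⁻¹ :=
  Equiv.Perm.extendDomain_inv π Fin.equivSubtype

lemma extend_lt {n : ℕ} (π : Equiv.Perm (Fin n)) (i : ℕ) (hi : i < n) : extend π i < n := by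
  have := extend_apply π ⟨i, hi⟩
  simp only at this
  omega

lemma breaks_of_minimal {n k : ℕ} (π : Equiv.Perm (Fin n)) (D : Set (Equiv.Perm (Fin (2 * k))))
    (hD : Nat.card D < 2 ^ k) (hmin : 2 * k < n → ∀ σ, PermContains σ π → σ ∈ D) :
    ∃ E : Finset ℕ, E.card ≤ 2 * k ∧ GoodBreaks (extend π) n 0 E := by
  rcases Nat.lt_or_ge (2 * k) n with h | h
  · rcases chunks_or_breaks (extend π) (extend π).injective n k 0 (by omega) with hc | hb
    · exfalso
      obtain ⟨F, hF, hF'⟩ := exp_patterns π (extend π) (extend_apply π) hc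
      have : Nat.card (Fin k → Bool) ≤ Nat.card D :=
        Nat.card_le_card_of_injective (fun b => (⟨F b, hmin h _ (hF' b)⟩ : D))
          (fun b b' hbb => hF (congrArg Subtype.val hbb))
      simp at this
      simp at hD
      omega
    · exact hb
  · refine ⟨Finset.range n, by simpa using h, ?_⟩
    intro i j _ hj hbr
    left
    intro x y hx hxy hy
    exact (hbr y (by simp; omega) ⟨by omega, hy⟩).elim

lemma exists_minimal (C : ∀ n : ℕ, Set (Equiv.Perm (Fin n))) (n : ℕ) :
    ∀ π : Equiv.Perm (Fin n), π ∉ C n → ∃ (m : ℕ) (β : Equiv.Perm (Fin m)), β ∉ C m ∧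
      (∀ k < m, ∀ σ : Equiv.Perm (Fin k), PermContains σ β → σ ∈ C k) ∧ PermContains β π := by
  induction n using Nat.strong_induction_on with
  | _ n ih =>
    intro π hπ
    by_cases h : ∀ k < n, ∀ σ : Equiv.Perm (Fin k), PermContains σ π → σ ∈ C k
    · exact ⟨n, π, hπ, h, PermContains.refl π⟩
    · push Not at h
      obtain ⟨k, hk, σ, hσ, hσC⟩ := h
      obtain ⟨m, β, h1, h2, h3⟩ := ih k hk σ hσC
      exact ⟨m, β, h1, h2, PermContains.trans h3 hσ⟩

end PolyClass

/-- **Theorem.** Every permutation class with eventually polynomial enumeration is finitely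
based: it is `Av(B)` for a finite set `B` of permutations. -/
theorem polynomial_class_finitely_based
    (C : ∀ n : ℕ, Set (Equiv.Perm (Fin n))) (hC : IsPermClass C)
    (hpoly : ∃ (p : Polynomial ℚ) (N : ℕ), ∀ n : ℕ, N ≤ n →
      (Nat.card (C n) : ℚ) = p.eval (n : ℚ)) :
    ∃ B : Set ((n : ℕ) × Equiv.Perm (Fin n)), B.Finite ∧
      ∀ (n : ℕ) (π : Equiv.Perm (Fin n)),
        π ∈ C n ↔ ∀ β ∈ B, ¬ PermContains β.2 π := by
  obtain ⟨p, N, hp⟩ := hpoly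
  obtain ⟨k, hkN, hk⟩ := PolyClass.exists_poly_lt p N
  have hcard : Nat.card (C (2 * k)) < 2 ^ k := by
    rw [← hp (2 * k) hkN] at hk
    exact_mod_cast hk
  refine ⟨{β | β.2 ∉ C β.1 ∧ ∀ k < β.1, ∀ σ : Equiv.Perm (Fin k),
    PermContains σ β.2 → σ ∈ C k}, ?_, ?_⟩
  · apply PolyClass.finite_of_rep (2 * k + 2 * k * (2 * k + 1))
    · rintro ⟨n, β⟩ ⟨hβ, hmin⟩
      obtain ⟨E, hEc, hE⟩ := PolyClass.breaks_of_minimal β (C (2 * k)) hcard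
        (fun h σ hσ => hmin _ h σ hσ)
      have hcard' : Nat.card {σ : Equiv.Perm (Fin (2 * k)) | σ⁻¹ ∈ C (2 * k)} < 2 ^ k := by
        refine lt_of_le_of_lt (Nat.card_le_card_of_injective
          (fun σ => (⟨σ.1⁻¹, σ.2⟩ : C (2 * k))) ?_) hcard
        intro σ τ h
        exact Subtype.ext (inv_injective (congrArg Subtype.val h))
      obtain ⟨E', hEc', hE'⟩ := PolyClass.breaks_of_minimal β⁻¹ _ hcard'
        (fun h σ hσ => hmin _ h σ⁻¹ (by simpa using PolyClass.PermContains.inv hσ))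
      rw [← PolyClass.extend_inv] at hE'
      refine PolyClass.exists_rep _ β (PolyClass.extend β) (PolyClass.extend_apply β)
        (PolyClass.extend β).injective (fun Q hQ => ?_)
      refine (PolyClass.unbonded_card _ n (PolyClass.extend_lt β) E E' hE hE' Q hQ).trans ?_
      gcongr
    · rintro ⟨n, β⟩ ⟨hβ, hβmin⟩ ⟨m, γ⟩ ⟨hγ, hγmin⟩ h
      rcases (PolyClass.PermContains.le h).lt_or_eq with hlt | heq
      · exact absurd (hγmin n hlt β h) hβ
      · simp only at heq
        subst heq
        exact congrArg _ (PolyClass.PermContains.eq h)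
  · intro n π
    constructor
    · rintro hπ ⟨m, β⟩ ⟨hβ, -⟩ hcon
      exact hβ (hC _ _ _ _ hπ hcon)
    · intro h
      by_contra hπ
      obtain ⟨m, β, h1, h2, h3⟩ := PolyClass.exists_minimal C n π hπ
      exact h ⟨m, β⟩ ⟨h1, h2⟩ h3
end
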